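/- arXiv:1908.04599 — 5 statements merged into one kernel-verified Lean document; each statement's English description precedes it below -/
import Mathlib

section
/- Let R be a ring and let P be a cochain complex of R-modules indexed by ℤ. Then P satisfies the lifting property against surjective quasi-isomorphisms — i.e. for every chain map π : X → Y that is degreewise surjective and a quasi-isomorphism and every chain map f : P → Y there exists a chain map g : P → X with π ∘ g = f — if and only if P is dg-projective, i.e. each component P^n is a projective R-module and every chain map from P to an acyclic complex is nullhomotopic. -/
/-!
Both directions are proved in an abelian category `C`, with "surjective" read as "degreewise
epimorphism", and then specialised to modules.

*dg-projective implies lifting* (`exists_lift`). Since the components of `P` are projective,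
`f : P ⟶ Y` lifts through `p : X ⟶ Y` degreewise. The failure of these lifts to commute with the
differentials is a `1`-cocycle in the complex of morphisms from `P` to `kernel p`. The kernel is
acyclic because `p` is an epimorphism and a quasi-isomorphism, so the cocycle, viewed as a chain map
`P ⟶ (kernel p)⟦1⟧`, is nullhomotopic, and a nullhomotopy corrects the degreewise lifts to a
chain map.

*Lifting implies dg-projective.* If `Y` is acyclic, the projection from the mapping cocone of `𝟙 Y`
to `Y` is a degreewise split epimorphism between acyclic complexes, hence `f : P ⟶ Y` lifts to the
cocone; since that projection is nullhomotopic, so is `f`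
(`LiftsSurjectiveQuasiIso.homotopy_zero`). For the projectivity of the components
(`LiftsSurjectiveQuasiIso.projective`), regard a graded object `A` as a complex with zero
differential; the cone of its identity is acyclic, and `P` maps to the cone on its own underlying
graded object by a map which in degree `n` has component `𝟙 (P.X n)`. Lifting this map through the
cone on projective presentations `Projective.over (P.X n) ⟶ P.X n` exhibits `P.X n` as a retract of
a projective object.
-/

open CategoryTheory Limits

/-- A cochain complex is acyclic if all of its homology modules vanish. -/
def IsAcyclicComplex {R : Type} [Ring R] (K : CochainComplex (ModuleCat R) ℤ) : Prop :=
  ∀ n : ℤ, IsZero (K.homology n)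

/-- A cochain complex `P` is dg-projective if each component is a projective module and
every chain map from `P` to an acyclic complex is nullhomotopic. -/
def IsDGProjective {R : Type} [Ring R] (P : CochainComplex (ModuleCat R) ℤ) : Prop :=
  (∀ n : ℤ, Module.Projective R (P.X n)) ∧
    ∀ (Y : CochainComplex (ModuleCat R) ℤ), IsAcyclicComplex Y →
      ∀ f : P ⟶ Y, Nonempty (Homotopy f 0)

namespace DGProjectiveLifting

open CochainComplex HomComplex
open scoped ZeroObject

variable {C : Type*} [Category C] [Abelian C]

lemma acyclic_iff_isZero_homology (K : CochainComplex C ℤ) :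
    K.Acyclic ↔ ∀ n, IsZero (K.homology n) :=
  forall_congr' fun n => K.exactAt_iff_isZero_homology n

lemma acyclic_of_homotopy_id_zero {K : CochainComplex C ℤ} (h : Homotopy (𝟙 K) 0) :
    K.Acyclic := by
  rw [acyclic_iff_isZero_homology]
  intro n
  rw [IsZero.iff_id_eq_zero, ← HomologicalComplex.homologyMap_id, h.homologyMap_eq]
  simp

lemma quasiIso_of_acyclic {K L : CochainComplex C ℤ} (f : K ⟶ L)
    (hK : K.Acyclic) (hL : L.Acyclic) : QuasiIso f := by
  rw [acyclic_iff_isZero_homology] at hK hL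
  rw [quasiIso_iff]
  intro n
  rw [quasiIsoAt_iff_isIso_homologyMap]
  exact isIso_of_source_target_iso_zero _ (hK n).isoZero (hL n).isoZero

lemma acyclic_shift {K : CochainComplex C ℤ} (hK : K.Acyclic) (n : ℤ) : (K⟦n⟧).Acyclic := by
  rw [← HomotopyCategory.quotient_obj_mem_subcategoryAcyclic_iff_acyclic] at hK ⊢
  exact ObjectProperty.prop_of_iso _
    (((HomotopyCategory.quotient C (.up ℤ)).commShiftIso n).symm.app K)
    ((HomotopyCategory.subcategoryAcyclic C).le_shift n _ hK)

lemma acyclic_mappingCone_id (K : CochainComplex C ℤ) : (mappingCone (𝟙 K)).Acyclic :=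
  acyclic_of_homotopy_id_zero
    (mappingCone.liftHomotopy _ _ _ (mappingCone.snd _) 0 (by simp) (by simp))

lemma acyclic_mappingCocone_id (K : CochainComplex C ℤ) : (mappingCocone (𝟙 K)).Acyclic :=
  acyclic_shift (acyclic_mappingCone_id K) _

/-- Up to sign, the second projection of the mapping cocone of `φ` is a nullhomotopy of the composite
`mappingCocone φ ⟶ K ⟶ L`. -/
lemma δ_mappingCocone_snd {K L : CochainComplex C ℤ} (φ : K ⟶ L) :
    δ (-1) 0 (mappingCocone.snd φ) = -Cochain.ofHom (mappingCocone.fst φ ≫ φ) := by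
  have h : mappingCocone.snd φ =
      mappingCocone.descCochain φ 0 (Cochain.ofHom (𝟙 L)) (neg_add_cancel 1) := by
    ext p q hpq
    rw [← cancel_epi (𝟙 _), ← mappingCocone.id_X φ p q hpq]
    simp [mappingCocone.inr_v_descCochain_v φ 0 (Cochain.ofHom (𝟙 L)) (neg_add_cancel 1)
      q p (by lia) q hpq]
  rw [h, mappingCocone.δ_descCochain _ _ _ _ 1 (zero_add 1)]
  simp

/-- Cocycles of any degree from a K-projective complex to an acyclic complex are coboundaries:
a cocycle of degree `n` amounts to a chain map `K ⟶ L⟦n⟧`. -/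
lemma eq_δ_of_cocycle {K L : CochainComplex C ℤ} {n : ℤ}
    (z : Cocycle K L n) [K.IsKProjective] (hL : L.Acyclic) (m : ℤ) (hm : m + 1 = n) :
    ∃ (α : Cochain K L m), δ m n α = z.1 := by
  rw [← mem_coboundaries_iff z m hm, ← CohomologyClass.toHom_mk_eq_zero_iff,
    CohomologyClass.toHom_mk, HomotopyCategory.quotient_map_eq_zero_iff]
  exact IsKProjective.nonempty_homotopy_zero _ (acyclic_shift hL n)

/-- A K-projective complex with projective components lifts along epimorphic quasi-isomorphisms.
The obstruction theory is that of `CochainComplex.Lifting`, applied to the square whose left side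
is `0 ⟶ P`, so that the cokernel occurring there is `P` itself. -/
lemma exists_lift {P X Y : CochainComplex C ℤ} [P.IsKProjective] [∀ n, Projective (P.X n)]
    (p : X ⟶ Y) [Epi p] [QuasiIso p] (f : P ⟶ Y) : ∃ g : P ⟶ X, g ≫ p = f := by
  have sq : CommSq (0 : (0 : CochainComplex C ℤ) ⟶ X) 0 p f := ⟨by simp⟩
  have hsq (n : ℤ) : (sq.map (HomologicalComplex.eval _ _ n)).LiftStruct :=
    { l := show P.X n ⟶ X.X n from Projective.factorThru (f.f n) (p.f n)
      fac_left := zero_comp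
      fac_right := Projective.factorThru_comp (f.f n) (p.f n) }
  have hQ : IsColimit (CokernelCofork.ofπ (f := (0 : (0 : CochainComplex C ℤ) ⟶ P))
      (𝟙 P) (by simp)) := CokernelCofork.IsColimit.ofId _ rfl
  have hK : (kernel p).Acyclic :=
    ShortComplex.ShortExact.acyclic_X₁ (S := ShortComplex.mk _ _ (kernel.condition p))
      { exact := ShortComplex.exact_kernel p } (by dsimp; infer_instance)
  obtain ⟨α, hα⟩ := eq_δ_of_cocycle
    (Lifting.cocycle₁ sq hsq hQ (hι := kernel.condition p) (kernelIsKernel p)) hK 0 (by simp)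
  have := Lifting.hasLift sq hsq hQ (kernelIsKernel p) α hα
  exact ⟨sq.lift, sq.fac_right⟩

/-- The lifting property against quasi-isomorphisms which are epimorphisms in each degree. -/
def LiftsSurjectiveQuasiIso (P : CochainComplex C ℤ) : Prop :=
  ∀ ⦃X Y : CochainComplex C ℤ⦄ (p : X ⟶ Y), (∀ n, Epi (p.f n)) → QuasiIso p →
    ∀ f : P ⟶ Y, ∃ g : P ⟶ X, g ≫ p = f

variable {P : CochainComplex C ℤ}

/-- The lift of `f` is taken along `mappingCocone (𝟙 Y) ⟶ Y`. -/
lemma LiftsSurjectiveQuasiIso.homotopy_zero (hP : LiftsSurjectiveQuasiIso P)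
    {Y : CochainComplex C ℤ} (hY : Y.Acyclic) (f : P ⟶ Y) : Nonempty (Homotopy f 0) := by
  obtain ⟨g, rfl⟩ := hP (mappingCocone.fst (𝟙 Y))
    (fun n => (SplitEpi.mk _ (mappingCocone.inl_v_fst_f (𝟙 Y) n)).epi)
    (quasiIso_of_acyclic _ (acyclic_mappingCocone_id Y) hY) f
  refine ⟨(Cochain.equivHomotopy _ _).symm
    ⟨-(Cochain.ofHom g).comp (mappingCocone.snd (𝟙 Y)) (zero_add _), ?_⟩⟩
  rw [δ_neg, δ_zero_cochain_comp _ _ _ (neg_add_cancel 1), δ_mappingCocone_snd]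
  simp

/-- The graded object `A`, regarded as a complex with zero differential. -/
abbrev zeroDifferential (A : ℤ → C) : CochainComplex C ℤ where
  X := A
  d _ _ := 0

/-- The chain map between complexes with zero differential given by a family of morphisms. -/
abbrev zeroDifferentialMap {A B : ℤ → C} (f : ∀ n, A n ⟶ B n) :
    zeroDifferential A ⟶ zeroDifferential B where
  f := f

/-- The chain map from `P` to the cone of the identity of its underlying graded object, with
components `P.d n (n + 1)` and `𝟙 (P.X n)` in degree `n`. -/
noncomputable def toCone (P : CochainComplex C ℤ) : P ⟶ mappingCone (𝟙 (zeroDifferential P.X)) :=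
  mappingCone.lift _
    (Cocycle.mk (Cochain.mk (fun p q _ => P.d p q)) 2 (by lia) (by
      ext p q hpq
      simp [δ_v 1 2 (by lia) _ p q hpq (p + 1) (p + 1) (by lia) rfl]))
    (Cochain.ofHoms (fun n => 𝟙 (P.X n))) (by
      ext p q hpq
      simp)

lemma toCone_f_snd (n : ℤ) : (toCone P).f n ≫ (mappingCone.snd _).v n n (add_zero n) =
    𝟙 (P.X n) := by
  simp [toCone]

/-- The lift of `toCone P` is taken along the map of cones induced by projective presentations
of the components of `P`. -/
lemma LiftsSurjectiveQuasiIso.projective [EnoughProjectives C]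
    (hP : LiftsSurjectiveQuasiIso P) (n : ℤ) : Projective (P.X n) := by
  let e : zeroDifferential (fun n => Projective.over (P.X n)) ⟶ zeroDifferential P.X :=
    zeroDifferentialMap fun n => Projective.π (P.X n)
  let p := mappingCone.map (𝟙 _) (𝟙 _) e e (by simp)
  have hp (n : ℤ) : Epi (p.f n) := by
    have hinl : (mappingCone.inl _).v (n + 1) n (by lia) ≫ p.f n =
        e.f (n + 1) ≫ (mappingCone.inl _).v (n + 1) n (by lia) := by
      simp [p, mappingCone.map]
    have hinr : (mappingCone.inr _).f n ≫ p.f n = e.f n ≫ (mappingCone.inr _).f n := by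
      simp [p, mappingCone.map]
    have he (k : ℤ) : Epi (e.f k) := inferInstanceAs (Epi (Projective.π (P.X k)))
    refine ⟨fun u v huv => mappingCone.ext_from _ (n + 1) n rfl ?_ ?_⟩
    · rw [← cancel_epi (e.f (n + 1)), ← reassoc_of% hinl, huv, reassoc_of% hinl]
    · rw [← cancel_epi (e.f n), ← reassoc_of% hinr, huv, reassoc_of% hinr]
  obtain ⟨g, hg⟩ := hP p hp
    (quasiIso_of_acyclic _ (acyclic_mappingCone_id _) (acyclic_mappingCone_id _)) (toCone P)
  have h := toCone_f_snd (P := P) n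
  rw [← hg, HomologicalComplex.comp_f, Category.assoc] at h
  have hsnd : p.f n ≫ (mappingCone.snd _).v n n (add_zero n) =
      (mappingCone.snd _).v n n (add_zero n) ≫ e.f n := by
    apply mappingCone.ext_from _ (n + 1) n rfl <;> simp [p, mappingCone.map]
  rw [hsnd, ← Category.assoc] at h
  let r : Retract (P.X n) (Projective.over (P.X n)) :=
    { i := g.f n ≫ (mappingCone.snd _).v n n (add_zero n)
      r := Projective.π (P.X n)
      retract := h }
  exact r.projective

end DGProjectiveLifting

open DGProjectiveLifting in
/-- `P` has the lifting property against surjective quasi-isomorphisms iff `P` is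
dg-projective. -/
theorem lifting_property_iff_dgProjective {R : Type} [Ring R]
    (P : CochainComplex (ModuleCat R) ℤ) :
    (∀ (X Y : CochainComplex (ModuleCat R) ℤ) (π : X ⟶ Y),
        (∀ n : ℤ, Function.Surjective (π.f n)) → QuasiIso π →
          ∀ f : P ⟶ Y, ∃ g : P ⟶ X, g ≫ π = f) ↔ IsDGProjective P := by
  constructor
  · intro h
    have hP : LiftsSurjectiveQuasiIso P := fun X Y p hp hq f =>
      h X Y p (fun n => (ModuleCat.epi_iff_surjective _).1 (hp n)) hq f
    refine ⟨fun n => ?_, fun Y hY f =>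
      hP.homotopy_zero ((acyclic_iff_isZero_homology Y).2 hY) f⟩
    have := hP.projective n
    infer_instance
  · rintro ⟨h₁, h₂⟩ X Y p hp hq f
    have : P.IsKProjective := ⟨fun f hL => h₂ _ ((acyclic_iff_isZero_homology _).1 hL) f⟩
    have (n : ℤ) : Epi (p.f n) := (ModuleCat.epi_iff_surjective _).2 (hp n)
    have : Epi p := HomologicalComplex.epi_of_epi_f p inferInstance
    exact exists_lift p f
end

section
/- Let R be a ring. Every cochain complex X of R-modules admits a chain map p : P → X that is degreewise surjective and a quasi-isomorphism, where P is dg-projective (each component P^n is a projective R-module and every chain map from P to an acyclic complex is nullhomotopic). -/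
/-!
The complex `P` is obtained by the small object argument, as a cofibrant replacement of `X`.

Let `I` be the set of inclusions of the sphere (`R` in degree `n + 1`) into the disk
(`R` in degrees `n` and `n + 1`, with identity differential), for `n : ℤ`. These are
monomorphisms in a Grothendieck abelian category, so `0 ⟶ X` factors as `0 ⟶ P ⟶ X`, where
`p : P ⟶ X` has the right lifting property with respect to `I`, and `0 ⟶ P` has the left lifting
property with respect to all maps with that property.

In terms of elements (`LiftsPrimitives`), the lifting property of `p` says that, given a cycle `z`
of `P` and an `x` with `d x = p z`, there is an `e` with `d e = z` and `p e = x`. Taking `z = 0`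
shows that `p` is surjective on cycles, hence surjective; and `p` is injective on homology.

That `P` is dg-projective follows from its lifting property against maps out of two
contractible complexes of the form `cofree M`, which in degree `n` is `M n × M (n + 1)`.
* If `M ⟶ N` is degreewise surjective, then `cofree M ⟶ cofree N` has the lifting property, and
  maps `P ⟶ cofree N` are families of linear maps `P.X n ⟶ N n`: so `P.X n` is projective.
* If `Y` is acyclic, then `(u, v) ↦ d u + v`, from `cofree` of `n ↦ Y.X (n - 1)` to `Y`, has
  the lifting property, and a lift of `f : P ⟶ Y` along it is a null homotopy of `f`.
-/


open CategoryTheory Limits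

universe v

variable {R : Type} [Ring R]

/-! ### Generating maps and the small object argument -/

/-- `ModuleCat.{v} R` is a Grothendieck abelian category also when the universe `v` is not that
of `R`: it is equivalent to the category of modules over `ULift.{v} R`. -/
lemma isGrothendieckAbelian_moduleCat : IsGrothendieckAbelian.{v} (ModuleCat.{v} R) :=
  IsGrothendieckAbelian.of_equivalence
    (ModuleCat.restrictScalarsEquivalenceOfRingEquiv
      (ULift.ringEquiv.{0, v} (R := R)).symm)

/-- In a Grothendieck abelian category, every small family of monomorphisms permits the small
object argument: relative cell complexes are transfinite compositions of monomorphisms, and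
`Hom(A, -)` commutes with the colimits of long enough chains of monomorphisms. -/
lemma hasSmallObjectArgument_of_mono {C : Type*} [Category* C] [Abelian C]
    [IsGrothendieckAbelian.{v} C] {ι : Type} {A B : ι → C} (i : ∀ k, A k ⟶ B k)
    (hi : ∀ k, Mono (i k)) [Small.{v} ι] :
    MorphismProperty.HasSmallObjectArgument.{v} (MorphismProperty.ofHoms i) := by
  obtain ⟨κ, hκ', hκ⟩ := HasCardinalLT.exists_regular_cardinal_forall.{v}
    (fun k => Subobject (A k))
  have : Fact κ.IsRegular := ⟨hκ'⟩
  have : Nonempty κ.ord.ToType := by simpa using hκ'.ne_zero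
  have := WellFoundedLT.toOrderBot κ.ord.ToType
  exact ⟨κ, inferInstance, inferInstance,
    { preservesColimit {A' B' X Y} j hj f hf := by
        let hf' : (MorphismProperty.monomorphisms C).TransfiniteCompositionOfShape
            κ.ord.ToType f :=
          { toTransfiniteCompositionOfShape := hf.toTransfiniteCompositionOfShape
            map_mem k hk := by
              have := (hf.attachCells k hk).pushouts_coproducts
              simp only [MorphismProperty.ofHoms_homFamily] at this
              refine (?_ : _ ≤ MorphismProperty.monomorphisms C) _ this
              simp only [MorphismProperty.pushouts_le_iff, MorphismProperty.coproducts_le_iff]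
              rintro _ _ _ ⟨k⟩
              exact hi k }
        have (k k' : κ.ord.ToType) (φ : k ⟶ k') : Mono (hf'.F.map φ) := hf'.mem_map φ
        obtain ⟨k⟩ := hj
        exact IsGrothendieckAbelian.preservesColimit_coyoneda_obj_of_mono
          (Y := hf'.F) (κ := κ) (hκ k) }⟩

variable (R) in
/-- The free module of rank one, in the universe `v`. -/
abbrev rankOne : ModuleCat.{v} R := ModuleCat.of R (ULift.{v} R)

/-- The map from the free module of rank one with value `x` at `1`. -/
def elemHom {M : ModuleCat.{v} R} (x : M) : rankOne.{v} R ⟶ M :=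
  ModuleCat.ofHom ((LinearMap.toSpanSingleton R M x).comp ULift.moduleEquiv.toLinearMap)

lemma elemHom_one {M : ModuleCat.{v} R} (x : M) : elemHom x (ULift.up 1) = x := by
  simp [elemHom]

lemma rankOne_hom_ext {M : ModuleCat.{v} R} {f g : rankOne.{v} R ⟶ M}
    (h : f (ULift.up 1) = g (ULift.up 1)) : f = g := by
  ext ⟨r⟩
  have hr : (ULift.up r : ULift.{v} R) = r • ULift.up 1 := by ext; simp
  rw [hr, map_smul, map_smul, h]

lemma elemHom_comp {M N : ModuleCat.{v} R} (x : M) (f : M ⟶ N) :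
    elemHom x ≫ f = elemHom (f x) :=
  rankOne_hom_ext (by rw [ConcreteCategory.comp_apply, elemHom_one, elemHom_one])

lemma elemHom_zero {M : ModuleCat.{v} R} : elemHom (0 : M) = 0 :=
  rankOne_hom_ext (elemHom_one 0)

lemma up_rel (n : ℤ) : (ComplexShape.up ℤ).Rel n (n + 1) := rfl

lemma ne_succ (n : ℤ) : n ≠ n + 1 := by lia

variable (R) in
/-- The disk: the free module of rank one in degrees `n` and `n + 1`, with identity
differential. -/
noncomputable abbrev disk (n : ℤ) : CochainComplex (ModuleCat.{v} R) ℤ :=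
  HomologicalComplex.double (𝟙 (rankOne.{v} R)) (up_rel n)

variable (R) in
/-- The sphere: the free module of rank one in the single degree `n + 1`. -/
noncomputable abbrev sphere (n : ℤ) : CochainComplex (ModuleCat.{v} R) ℤ :=
  (HomologicalComplex.single (ModuleCat.{v} R) (ComplexShape.up ℤ) (n + 1)).obj (rankOne R)

variable (R) in
/-- The inclusion of the sphere in degree `n + 1` as the boundary of the disk. -/
noncomputable def sphereToDisk (n : ℤ) : sphere.{v} R n ⟶ disk.{v} R n :=
  HomologicalComplex.mkHomFromSingle
    (HomologicalComplex.doubleXIso₁ (𝟙 (rankOne.{v} R)) (up_rel n) (ne_succ n)).inv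
    (fun k _ => by
      rw [HomologicalComplex.double_d_eq_zero₀ _ _ _ _ (ne_succ n).symm, comp_zero])

lemma mono_sphereToDisk (n : ℤ) : Mono (sphereToDisk.{v} R n) := by
  refine HomologicalComplex.mono_of_mono_f _ (fun k => ?_)
  by_cases hk : k = n + 1
  · subst hk
    rw [sphereToDisk, HomologicalComplex.mkHomFromSingle_f]
    infer_instance
  · exact ⟨fun _ _ _ =>
      (HomologicalComplex.isZero_single_obj_X (ComplexShape.up ℤ) _ _ _ hk).eq_of_tgt _ _⟩

variable (R) in
/-- The class of all the inclusions of spheres into disks. -/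
abbrev cells : MorphismProperty (CochainComplex (ModuleCat.{v} R) ℤ) :=
  MorphismProperty.ofHoms (sphereToDisk.{v} R)

/-! ### The lifting property in terms of elements -/

/-- The right lifting property with respect to the inclusions of spheres into disks, in terms of
elements: a cycle `z` of `E` together with a primitive `x` of its image lifts to a primitive of
`z` above `x`. -/
def LiftsPrimitives {E X : CochainComplex (ModuleCat.{v} R) ℤ} (p : E ⟶ X) : Prop :=
  ∀ (n : ℤ) (z : E.X (n + 1)) (x : X.X n), E.d (n + 1) (n + 1 + 1) z = 0 →
    X.d n (n + 1) x = p.f (n + 1) z → ∃ e : E.X n, E.d n (n + 1) e = z ∧ p.f n e = x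

lemma liftsPrimitives_of_rlp {E X : CochainComplex (ModuleCat.{v} R) ℤ} {p : E ⟶ X}
    (hp : (cells R).rlp p) : LiftsPrimitives p := by
  intro n z x hz hx
  let t : sphere.{v} R n ⟶ E := HomologicalComplex.mkHomFromSingle (elemHom z) (by
    rintro _ rfl
    rw [elemHom_comp, hz, elemHom_zero])
  let b : disk.{v} R n ⟶ X := HomologicalComplex.mkHomFromDouble (up_rel n) (ne_succ n)
    (elemHom x) (elemHom (X.d n (n + 1) x))
    (by rw [elemHom_comp, Category.id_comp])
    (by
      rintro _ rfl
      rw [← elemHom_comp, Category.assoc, X.d_comp_d, comp_zero])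
  have sq : CommSq t (sphereToDisk.{v} R n) p b := ⟨by
    refine HomologicalComplex.from_single_hom_ext ?_
    simp only [HomologicalComplex.comp_f, t, b, sphereToDisk,
      HomologicalComplex.mkHomFromSingle_f, HomologicalComplex.mkHomFromDouble_f₁,
      Category.assoc, Iso.inv_hom_id_assoc]
    congr 1
    rw [elemHom_comp, hx]⟩
  have := hp _ (MorphismProperty.ofHoms.mk (f := sphereToDisk.{v} R) n)
  obtain ⟨l, hl, hr⟩ : ∃ l, sphereToDisk.{v} R n ≫ l = t ∧ l ≫ p = b :=
    ⟨sq.lift, sq.fac_left, sq.fac_right⟩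
  have fl := congrArg (fun φ => φ.f (n + 1)) hl
  have fr := congrArg (fun φ => φ.f n) hr
  simp only [HomologicalComplex.comp_f, t, b, sphereToDisk,
      HomologicalComplex.mkHomFromSingle_f, HomologicalComplex.mkHomFromDouble_f₀,
      Category.assoc, Iso.cancel_iso_hom_left] at fl fr
  let ε := (HomologicalComplex.doubleXIso₀ (𝟙 (rankOne.{v} R)) (up_rel n)).inv ≫ l.f n
  have h₁ : ε ≫ E.d n (n + 1) = elemHom z := by
    rw [← fl, Category.assoc, l.comm,
      HomologicalComplex.double_d _ _ (ne_succ n)]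
    simp
  have h₂ : ε ≫ p.f n = elemHom x := by
    rw [Category.assoc, fr, Iso.inv_hom_id_assoc]
  refine ⟨ε (ULift.up 1), ?_, ?_⟩
  · rw [← ConcreteCategory.comp_apply, h₁, elemHom_one]
  · rw [← ConcreteCategory.comp_apply, h₂, elemHom_one]

lemma rlp_of_liftsPrimitives {E X : CochainComplex (ModuleCat.{v} R) ℤ} {p : E ⟶ X}
    (hp : LiftsPrimitives p) : (cells R).rlp p := by
  suffices h : ∀ n, HasLiftingProperty (sphereToDisk.{v} R n) p by
    rintro _ _ _ ⟨n⟩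
    exact h n
  intro n
  refine ⟨fun {t b} sq => ?_⟩
  let z : E.X (n + 1) :=
    ((HomologicalComplex.singleObjXSelf (ComplexShape.up ℤ) (n + 1) (rankOne.{v} R)).inv ≫
      t.f (n + 1)) (ULift.up 1)
  let x : X.X n :=
    ((HomologicalComplex.doubleXIso₀ (𝟙 (rankOne.{v} R)) (up_rel n)).inv ≫ b.f n) (ULift.up 1)
  have w := congrArg (fun φ => φ.f (n + 1)) sq.w
  simp only [HomologicalComplex.comp_f, sphereToDisk, HomologicalComplex.mkHomFromSingle_f,
    Category.assoc] at w
  have hz : E.d (n + 1) (n + 1 + 1) z = 0 := by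
    dsimp only [z]
    rw [← ConcreteCategory.comp_apply, Category.assoc, t.comm, HomologicalComplex.single_obj_d]
    simp
  have hx : X.d n (n + 1) x = p.f (n + 1) z := by
    dsimp only [z, x]
    rw [← ConcreteCategory.comp_apply, ← ConcreteCategory.comp_apply, Category.assoc,
      Category.assoc, b.comm, w, HomologicalComplex.double_d _ _ (ne_succ n)]
    simp
  obtain ⟨e, he, hpe⟩ := hp n z x hz hx
  have hz' : elemHom z =
      (HomologicalComplex.singleObjXSelf (ComplexShape.up ℤ) (n + 1) (rankOne.{v} R)).inv ≫
      t.f (n + 1) := rankOne_hom_ext (elemHom_one _)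
  have hx' : elemHom x =
      (HomologicalComplex.doubleXIso₀ (𝟙 (rankOne.{v} R)) (up_rel n)).inv ≫ b.f n :=
    rankOne_hom_ext (elemHom_one _)
  let l : disk.{v} R n ⟶ E := HomologicalComplex.mkHomFromDouble (up_rel n) (ne_succ n)
    (elemHom e) (elemHom z)
    (by rw [elemHom_comp, he, Category.id_comp])
    (by
      rintro _ rfl
      rw [elemHom_comp, hz, elemHom_zero])
  have hl : sphereToDisk.{v} R n ≫ l = t := by
    refine HomologicalComplex.from_single_hom_ext ?_
    simp [l, sphereToDisk, HomologicalComplex.mkHomFromSingle_f, hz']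
  refine ⟨⟨⟨l, hl, ?_⟩⟩⟩
  ext1
  · have : elemHom e ≫ p.f n = elemHom x := by rw [elemHom_comp, hpe]
    simp [l, this, hx']
  · simp only [HomologicalComplex.comp_f, l, HomologicalComplex.mkHomFromDouble_f₁, hz',
      Category.assoc, w, Iso.inv_hom_id_assoc, Iso.hom_inv_id_assoc]

lemma LiftsPrimitives.exists_cycle {E X : CochainComplex (ModuleCat.{v} R) ℤ} {p : E ⟶ X}
    (hp : LiftsPrimitives p) (n : ℤ) (x : X.X n) (hx : X.d n (n + 1) x = 0) :
    ∃ e : E.X n, E.d n (n + 1) e = 0 ∧ p.f n e = x :=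
  hp n 0 x (map_zero _) (by rw [hx, map_zero])

lemma LiftsPrimitives.surjective {E X : CochainComplex (ModuleCat.{v} R) ℤ} {p : E ⟶ X}
    (hp : LiftsPrimitives p) (n : ℤ) : Function.Surjective (p.f n) := by
  intro x
  obtain ⟨z, hz, hz'⟩ := hp.exists_cycle (n + 1) (X.d n (n + 1) x) (by
    rw [← ConcreteCategory.comp_apply, X.d_comp_d]
    rfl)
  obtain ⟨e, -, he⟩ := hp n z x hz hz'.symm
  exact ⟨e, he⟩

lemma LiftsPrimitives.quasiIso {E X : CochainComplex (ModuleCat.{v} R) ℤ} {p : E ⟶ X}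
    (hp : LiftsPrimitives p) : QuasiIso p := by
  refine ⟨fun m => ?_⟩
  obtain ⟨n, rfl⟩ : ∃ n, m = n + 1 := ⟨m - 1, by lia⟩
  rw [quasiIsoAt_iff_isIso_homologyMap]
  -- Both refinements are along the free module on the underlying set of `A`.
  have hπ (A : ModuleCat.{v} R) : Epi (ModuleCat.ofHom (Finsupp.linearCombination R (id : A → A)) :
      ModuleCat.of R (A →₀ R) ⟶ A) := by
    rw [ModuleCat.epi_iff_surjective]
    exact Finsupp.linearCombination_id_surjective R A
  have : Mono (HomologicalComplex.homologyMap p (n + 1)) := by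
    rw [HomologicalComplex.mono_homologyMap_iff_up_to_refinements p n (n + 1) (n + 1 + 1)
      (by simp) (by simp)]
    intro A z hz x hx
    have key (a : A) : ∃ e : E.X n, E.d n (n + 1) e = z a := by
      obtain ⟨e, he, -⟩ := hp n (z a) (x a) (ConcreteCategory.congr_hom hz a)
        (ConcreteCategory.congr_hom hx a).symm
      exact ⟨e, he⟩
    choose e he using key
    refine ⟨_, _, hπ A, ModuleCat.ofHom (Finsupp.linearCombination R e), ?_⟩
    ext a
    simp [he]
  have : Epi (HomologicalComplex.homologyMap p (n + 1)) := by
    rw [HomologicalComplex.epi_homologyMap_iff_up_to_refinements p n (n + 1) (n + 1 + 1)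
      (by simp) (by simp)]
    intro A y hy
    have key (a : A) := hp.exists_cycle (n + 1) (y a) (ConcreteCategory.congr_hom hy a)
    choose e he he' using key
    refine ⟨_, _, hπ A, ModuleCat.ofHom (Finsupp.linearCombination R e), ?_, 0, ?_⟩
    · ext a
      simp [he]
    · ext a
      simp [he']
  exact isIso_of_mono_of_epi _

/-! ### Contractible test complexes -/

/-- The contractible complex cofreely generated by the graded module `M`: in degree `n` it is
`M n × M (n + 1)`, with differential `(a, b) ↦ (b, 0)`. -/
def cofree (M : ℤ → ModuleCat.{v} R) : CochainComplex (ModuleCat.{v} R) ℤ :=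
  CochainComplex.of (fun n => ModuleCat.of R (M n × M (n + 1)))
    (fun n => ModuleCat.ofHom ((LinearMap.inl R (M (n + 1)) (M (n + 1 + 1))).comp
      (LinearMap.snd R (M n) (M (n + 1)))))
    (fun n => by ext <;> simp)

/-- An element of the cofree complex. -/
def cofreeMk (M : ℤ → ModuleCat.{v} R) {n : ℤ} (a : M n) (b : M (n + 1)) : (cofree M).X n :=
  (a, b)

/-- The projection of the cofree complex to its cogenerators. -/
def cofreeFst (M : ℤ → ModuleCat.{v} R) (n : ℤ) : (cofree M).X n ⟶ M n :=
  ModuleCat.ofHom (LinearMap.fst R (M n) (M (n + 1)))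

/-- The projection of the cofree complex to its second component. -/
def cofreeSnd (M : ℤ → ModuleCat.{v} R) (n : ℤ) : (cofree M).X n ⟶ M (n + 1) :=
  ModuleCat.ofHom (LinearMap.snd R (M n) (M (n + 1)))

lemma cofreeFst_mk (M : ℤ → ModuleCat.{v} R) {n : ℤ} (a : M n) (b : M (n + 1)) :
    cofreeFst M n (cofreeMk M a b) = a := rfl

lemma cofreeSnd_mk (M : ℤ → ModuleCat.{v} R) {n : ℤ} (a : M n) (b : M (n + 1)) :
    cofreeSnd M n (cofreeMk M a b) = b := rfl

lemma cofree_ext {M : ℤ → ModuleCat.{v} R} {n : ℤ} {x y : (cofree M).X n}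
    (h₁ : cofreeFst M n x = cofreeFst M n y) (h₂ : cofreeSnd M n x = cofreeSnd M n y) : x = y :=
  Prod.ext h₁ h₂

lemma cofree_d (M : ℤ → ModuleCat.{v} R) (n : ℤ) (x : (cofree M).X n) :
    (cofree M).d n (n + 1) x = cofreeMk M (cofreeSnd M n x) 0 :=
  ConcreteCategory.congr_hom (CochainComplex.of_d _ _ n) x

lemma cofree_d_fst (M : ℤ → ModuleCat.{v} R) (n : ℤ) :
    (cofree M).d n (n + 1) ≫ cofreeFst M (n + 1) = cofreeSnd M n := by
  ext x
  simp only [ConcreteCategory.comp_apply, cofree_d, cofreeFst_mk]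

lemma cofree_d_snd (M : ℤ → ModuleCat.{v} R) (n : ℤ) :
    (cofree M).d n (n + 1) ≫ cofreeSnd M (n + 1) = 0 := by
  ext x
  simp only [ConcreteCategory.comp_apply, cofree_d, cofreeSnd_mk]
  rfl

/-- The chain map `x ↦ (g x, g (d x))` to a cofree complex given by a map `g` of graded
modules. -/
def toCofree {P : CochainComplex (ModuleCat.{v} R) ℤ} (M : ℤ → ModuleCat.{v} R)
    (g : ∀ n, P.X n ⟶ M n) : P ⟶ cofree M where
  f n := ModuleCat.ofHom ((g n).hom.prod (P.d n (n + 1) ≫ g (n + 1)).hom)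
  comm' := by
    rintro n _ rfl
    ext x
    change (cofree M).d n (n + 1) _ = _
    rw [cofree_d]
    refine cofree_ext rfl ?_
    have := ConcreteCategory.congr_hom (P.d_comp_d n (n + 1) (n + 1 + 1)) x
    change 0 = g (n + 1 + 1) ((P.d n (n + 1) ≫ P.d (n + 1) (n + 1 + 1)) x)
    rw [this]
    exact (map_zero (g (n + 1 + 1)).hom).symm

lemma toCofree_fst {P : CochainComplex (ModuleCat.{v} R) ℤ} (M : ℤ → ModuleCat.{v} R)
    (g : ∀ n, P.X n ⟶ M n) (n : ℤ) : (toCofree M g).f n ≫ cofreeFst M n = g n := rfl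

/-- The functoriality of cofree complexes. -/
def cofreeMap {M N : ℤ → ModuleCat.{v} R} (f : ∀ n, M n ⟶ N n) : cofree M ⟶ cofree N :=
  toCofree N (fun n => cofreeFst M n ≫ f n)

lemma cofreeMap_fst {M N : ℤ → ModuleCat.{v} R} (f : ∀ n, M n ⟶ N n) (n : ℤ) :
    (cofreeMap f).f n ≫ cofreeFst N n = cofreeFst M n ≫ f n := rfl

lemma cofreeMap_snd {M N : ℤ → ModuleCat.{v} R} (f : ∀ n, M n ⟶ N n) (n : ℤ) :
    (cofreeMap f).f n ≫ cofreeSnd N n = cofreeSnd M n ≫ f (n + 1) := by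
  rw [← cofree_d_fst, ← cofree_d_fst, Category.assoc, ← cofreeMap_fst,
    (cofreeMap f).comm_assoc]

lemma cofree_cycle {M : ℤ → ModuleCat.{v} R} {n : ℤ} {z : (cofree M).X n}
    (hz : (cofree M).d n (n + 1) z = 0) : cofreeSnd M n z = 0 := by
  rw [← cofree_d_fst, ConcreteCategory.comp_apply, hz, map_zero]

lemma liftsPrimitives_cofreeMap {M N : ℤ → ModuleCat.{v} R} (f : ∀ n, M n ⟶ N n)
    (hf : ∀ n, Function.Surjective (f n)) : LiftsPrimitives (cofreeMap f) := by
  intro n z x hz hx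
  obtain ⟨a, ha⟩ := hf n (cofreeFst N n x)
  refine ⟨cofreeMk M a (cofreeFst M (n + 1) z), ?_, ?_⟩
  · rw [cofree_d, cofreeSnd_mk]
    exact cofree_ext rfl (cofree_cycle hz).symm
  · refine cofree_ext ?_ ?_
    · rw [← ConcreteCategory.comp_apply, cofreeMap_fst, ConcreteCategory.comp_apply,
        cofreeFst_mk, ha]
    · rw [← ConcreteCategory.comp_apply, cofreeMap_snd, ConcreteCategory.comp_apply,
        cofreeSnd_mk, ← ConcreteCategory.comp_apply, ← cofreeMap_fst,
        ConcreteCategory.comp_apply, ← hx, ← ConcreteCategory.comp_apply, cofree_d_fst]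

/-- The path complex of `Y`: maps into it are the families of maps to `Y` of degree `-1`. -/
abbrev path (Y : CochainComplex (ModuleCat.{v} R) ℤ) : CochainComplex (ModuleCat.{v} R) ℤ :=
  cofree (fun n => Y.X (n - 1))

/-- The chain map `(u, v) ↦ d u + v` from the path complex of `Y` to `Y`. -/
def pathMap (Y : CochainComplex (ModuleCat.{v} R) ℤ) : path Y ⟶ Y where
  f n := cofreeFst _ n ≫ Y.d (n - 1) n +
    cofreeSnd _ n ≫ (Y.XIsoOfEq (show n + 1 - 1 = n by lia)).hom
  comm' := by
    rintro n _ rfl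
    have h₁ := cofree_d_fst (fun n => Y.X (n - 1)) n
    have h₂ := cofree_d_snd (fun n => Y.X (n - 1)) n
    simp only [Preadditive.add_comp, Preadditive.comp_add, Category.assoc,
      Y.d_comp_d, comp_zero, zero_add, HomologicalComplex.XIsoOfEq_hom_comp_d]
    rw [reassoc_of% h₁, reassoc_of% h₂]
    simp

lemma liftsPrimitives_pathMap (Y : CochainComplex (ModuleCat.{v} R) ℤ)
    (hY : IsAcyclicComplex Y) : LiftsPrimitives (pathMap Y) := by
  intro n z x hz hx
  have exact := (Y.exactAt_iff' (n - 1) n (n + 1) (by simp) (by simp)).1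
    ((Y.exactAt_iff_isZero_homology n).2 (hY n))
  rw [ShortComplex.moduleCat_exact_iff] at exact
  let a : Y.X (n + 1 - 1) := cofreeFst _ (n + 1) z
  have hz0 := cofree_cycle hz
  obtain ⟨u, hu⟩ := exact (x - (Y.XIsoOfEq (show n + 1 - 1 = n by lia)).hom a) (by
    have : Y.d n (n + 1) ((Y.XIsoOfEq (show n + 1 - 1 = n by lia)).hom a) =
        Y.d (n + 1 - 1) (n + 1) a := by
      rw [← ConcreteCategory.comp_apply, HomologicalComplex.XIsoOfEq_hom_comp_d]
    change Y.d n (n + 1) _ = 0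
    rw [map_sub, this, hx, sub_eq_zero]
    change Y.d (n + 1 - 1) (n + 1) a + (Y.XIsoOfEq _).hom (cofreeSnd (fun n => Y.X (n - 1)) (n + 1) z) = _
    rw [hz0, map_zero, add_zero])
  refine ⟨cofreeMk (fun n => Y.X (n - 1)) (n := n) u a, ?_, ?_⟩
  · rw [cofree_d]
    exact cofree_ext rfl hz0.symm
  · change Y.d (n - 1) n u + (Y.XIsoOfEq _).hom a = x
    exact eq_sub_iff_add_eq.1 hu

/-! ### Cofibrant complexes are dg-projective -/

/-- A complex is cofibrant if maps out of it lift along every map with the right lifting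
property with respect to the inclusions of spheres into disks. -/
def IsCofibrantComplex (P : CochainComplex (ModuleCat.{v} R) ℤ) : Prop :=
  ∀ ⦃E X : CochainComplex (ModuleCat.{v} R) ℤ⦄ (p : E ⟶ X), LiftsPrimitives p →
    ∀ f : P ⟶ X, ∃ l : P ⟶ E, l ≫ p = f

lemma IsCofibrantComplex.isDGProjective {P : CochainComplex (ModuleCat.{v} R) ℤ}
    (hP : IsCofibrantComplex P) : IsDGProjective P := by
  constructor
  · intro n
    refine Module.Projective.of_lifting_property'' fun f hf => ?_
    let M : ModuleCat.{v} R := ModuleCat.of R (P.X n →₀ R)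
    -- The identity of `P.X n`, extended by zero to the other degrees.
    let g (k : ℤ) : P.X k ⟶ P.X n := if h : k = n then (P.XIsoOfEq h).hom else 0
    obtain ⟨l, hl⟩ := hP (cofreeMap (M := fun _ => M) (N := fun _ => P.X n)
      (fun _ => ModuleCat.ofHom f)) (liftsPrimitives_cofreeMap _ (fun _ => hf))
      (toCofree (fun _ => P.X n) g)
    have h := congrArg (fun φ => φ.f n ≫ cofreeFst (fun _ => P.X n) n) hl
    simp only [HomologicalComplex.comp_f, Category.assoc, cofreeMap_fst, toCofree_fst] at h
    refine ⟨(l.f n ≫ cofreeFst (fun _ => M) n).hom, ?_⟩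
    have hg : g n = 𝟙 _ := by simp [g]
    rw [hg] at h
    exact congrArg ModuleCat.Hom.hom h
  · intro Y hY f
    obtain ⟨l, rfl⟩ := hP (pathMap Y) (liftsPrimitives_pathMap Y hY) f
    let h (i j : ℤ) (hij : (ComplexShape.up ℤ).Rel j i) : P.X i ⟶ Y.X j :=
      l.f i ≫ cofreeFst (fun n => Y.X (n - 1)) i ≫
        (Y.XIsoOfEq (show i - 1 = j by have : j + 1 = i := hij; lia)).hom
    have : l ≫ pathMap Y = Homotopy.nullHomotopicMap' h := by
      ext1 n
      have h₁ : (ComplexShape.up ℤ).Rel (n - 1) n := by simp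
      rw [Homotopy.nullHomotopicMap'_f h₁ (up_rel n)]
      have e : cofreeSnd (fun n => Y.X (n - 1)) n =
        (path Y).d n (n + 1) ≫ cofreeFst (fun n => Y.X (n - 1)) (n + 1) := (cofree_d_fst _ n).symm
      simp only [HomologicalComplex.comp_f, pathMap, Preadditive.comp_add, h, e,
        Category.assoc, HomologicalComplex.XIsoOfEq_hom_comp_d]
      rw [add_comm, l.comm_assoc]
    rw [this]
    exact ⟨Homotopy.nullHomotopy' h⟩

lemma exists_cofibrant (X : CochainComplex (ModuleCat.{v} R) ℤ) :
    ∃ (P : CochainComplex (ModuleCat.{v} R) ℤ) (p : P ⟶ X),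
      IsCofibrantComplex P ∧ LiftsPrimitives p := by
  have := isGrothendieckAbelian_moduleCat.{v} (R := R)
  have := hasSmallObjectArgument_of_mono.{v} (sphereToDisk.{v} R) mono_sphereToDisk
  let d := MorphismProperty.factorizationData (cells.{v} R).rlp.llp (cells.{v} R).rlp
    (0 : HomologicalComplex.zero ⟶ X)
  refine ⟨d.Z, d.p, fun E Y q hq f => ?_, liftsPrimitives_of_rlp d.hp⟩
  have sq : CommSq (0 : HomologicalComplex.zero ⟶ E) d.i q f := ⟨HomologicalComplex.isZero_zero.eq_of_src _ _⟩
  have := d.hi q (rlp_of_liftsPrimitives hq)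
  exact ⟨sq.lift, sq.fac_right⟩

/-- Every cochain complex admits a dg-projective resolution, i.e. a degreewise surjective
quasi-isomorphism from a dg-projective complex. -/
theorem exists_dgProjective_resolution {R : Type} [Ring R]
    (X : CochainComplex (ModuleCat R) ℤ) :
    ∃ (P : CochainComplex (ModuleCat R) ℤ) (p : P ⟶ X),
      IsDGProjective P ∧ (∀ n : ℤ, Function.Surjective (p.f n)) ∧ QuasiIso p := by
  obtain ⟨P, p, hP, hp⟩ := exists_cofibrant X
  exact ⟨P, p, hP.isDGProjective, hp.surjective, hp.quasiIso⟩
end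

section
/- Let R be a ring and X a cochain complex of R-modules. If p : P → X and p' : P' → X are both surjective quasi-isomorphisms with P and P' dg-projective, then there exists a chain map g : P → P' which is a homotopy equivalence and satisfies p' ∘ g homotopic to p; moreover any two chain maps g, g' : P → P' with p' ∘ g and p' ∘ g' homotopic to p are themselves homotopic. (Thus the dg-projective resolution is unique up to a unique isomorphism in the homotopy category.) -/
/-!
A dg-projective complex `P` is K-projective, so morphisms out of `P` in the homotopy category
agree with morphisms in the derived category, where quasi-isomorphisms are invertible. Hence
composition with a quasi-isomorphism `s : A ⟶ B` is a bijection from homotopy classes of maps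
`P ⟶ A` to homotopy classes of maps `P ⟶ B` (`IsDGProjective.exists_lift` and
`IsDGProjective.homotopy_of_comp`). Lifting `p` through `p'` and `p'` through `p` gives `g` and
`h`; both composites, and any two choices of `g`, are compared by injectivity.
-/

open CategoryTheory Limits

open HomologicalComplex DerivedCategory

lemma IsDGProjective.isKProjective {R : Type} [Ring R] {P : CochainComplex (ModuleCat R) ℤ}
    (hP : IsDGProjective P) : P.IsKProjective where
  nonempty_homotopy_zero f hL :=
    hP.2 _ (fun n => ((exactAt_iff_isZero_homology _ n).1 (hL n))) f

/-- Surjectivity on homotopy classes of composition with a quasi-isomorphism. -/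
lemma IsDGProjective.exists_lift {R : Type} [Ring R] {P A B : CochainComplex (ModuleCat R) ℤ}
    (hP : IsDGProjective P) (s : A ⟶ B) [QuasiIso s] (f : P ⟶ B) :
    ∃ g : P ⟶ A, Nonempty (Homotopy (g ≫ s) f) := by
  let := HasDerivedCategory.standard (ModuleCat R)
  have := hP.isKProjective
  obtain ⟨φ, hφ⟩ := (CochainComplex.IsKProjective.Qh_map_bijective P _).surjective
    ((quotientCompQhIso _).hom.app P ≫ Q.map f ≫ inv (Q.map s) ≫
      (quotientCompQhIso _).inv.app A)
  obtain ⟨g, rfl⟩ := (HomotopyCategory.quotient _ _).map_surjective φ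
  refine ⟨g, ⟨HomotopyCategory.homotopyOfEq _ _
    ((CochainComplex.IsKProjective.Qh_map_bijective P _).injective ?_)⟩⟩
  rw [← cancel_mono ((quotientCompQhIso (ModuleCat R)).hom.app B)]
  simp [hφ]

/-- Injectivity on homotopy classes of composition with a quasi-isomorphism. -/
lemma IsDGProjective.homotopy_of_comp {R : Type} [Ring R]
    {P A B : CochainComplex (ModuleCat R) ℤ}
    (hP : IsDGProjective P) (s : A ⟶ B) [QuasiIso s] {g g' : P ⟶ A}
    (H : Homotopy (g ≫ s) (g' ≫ s)) : Nonempty (Homotopy g g') := by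
  let := HasDerivedCategory.standard (ModuleCat R)
  have := hP.isKProjective
  refine ⟨HomotopyCategory.homotopyOfEq _ _
    ((CochainComplex.IsKProjective.Qh_map_bijective P _).injective ?_)⟩
  have e := congrArg (fun t => Qh.map t ≫ (quotientCompQhIso (ModuleCat R)).hom.app B)
    (HomotopyCategory.eq_of_homotopy _ _ H)
  rw [← cancel_mono ((quotientCompQhIso (ModuleCat R)).hom.app A), ← cancel_mono (Q.map s)]
  simpa using e

/-- Uniqueness of dg-projective resolutions: given two surjective quasi-isomorphisms
`p : P ⟶ X`, `p' : P' ⟶ X` with `P`, `P'` dg-projective, there is a comparison map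
`g : P ⟶ P'` which is a homotopy equivalence with `g ≫ p'` homotopic to `p`; moreover any
two such comparison maps are homotopic. -/
theorem dgProjective_resolution_unique {R : Type} [Ring R]
    {X P P' : CochainComplex (ModuleCat R) ℤ} (p : P ⟶ X) (p' : P' ⟶ X)
    (hP : IsDGProjective P) (hP' : IsDGProjective P')
    (hps : ∀ n : ℤ, Function.Surjective (p.f n)) (hpq : QuasiIso p)
    (hp's : ∀ n : ℤ, Function.Surjective (p'.f n)) (hp'q : QuasiIso p') :
    (∃ g : P ⟶ P',
        (∃ h : P' ⟶ P, Nonempty (Homotopy (g ≫ h) (𝟙 P)) ∧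
          Nonempty (Homotopy (h ≫ g) (𝟙 P'))) ∧
        Nonempty (Homotopy (g ≫ p') p)) ∧
      ∀ g g' : P ⟶ P', Nonempty (Homotopy (g ≫ p') p) →
        Nonempty (Homotopy (g' ≫ p') p) → Nonempty (Homotopy g g') := by
  obtain ⟨g, ⟨hg⟩⟩ := hP.exists_lift p' p
  obtain ⟨h, ⟨hh⟩⟩ := hP'.exists_lift p p'
  refine ⟨⟨g, ⟨h, hP.homotopy_of_comp p ?_, hP'.homotopy_of_comp p' ?_⟩, ⟨hg⟩⟩, ?_⟩
  · exact (Homotopy.ofEq (by simp)).trans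
      (((hh.compLeft g).trans hg).trans (Homotopy.ofEq (by simp)))
  · exact (Homotopy.ofEq (by simp)).trans
      (((hg.compLeft h).trans hh).trans (Homotopy.ofEq (by simp)))
  · rintro g g' ⟨H⟩ ⟨H'⟩
    exact hP.homotopy_of_comp p' (H.trans H'.symm)
end

section
/- Let R be a ring. Every cochain complex X of R-modules admits a chain map i : X → I that is degreewise injective (a monomorphism in each degree) and a quasi-isomorphism, where I is dg-injective: each component I^n is an injective R-module and every chain map from an acyclic complex to I is nullhomotopic. -/
/-!
The resolution is Spaltenstein's. In an abelian category with enough injectives, embed the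
truncations `τ_{≥ -n} X` compatibly and quasi-isomorphically into bounded below complexes
`K (n + 1)` of injectives, so that the transition maps `K (n + 1) ⟶ K n` are degreewise
epimorphisms with injective kernel and `K 0 = 0` (`exists_tower`, by the factorization of maps
between bounded below complexes into an acyclic monomorphism followed by a fibration). The
resolution of `X` is `I = lim K n`.

* `I` is K-injective (`tower_isKInjective`): an acyclic monomorphism lifts against each transition
  map (`hasLift_of_fibration`), hence maps to `I` extend along it. For `Y` acyclic this applies
  to the inclusion of `Y` into the cone of `𝟙 Y`, and a map which extends to this contractible
  complex is nullhomotopic. The same argument in a fixed degree shows that the components of `I`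
  are injective (`tower_injective`).
* `X ⟶ I` is a quasi-isomorphism (`tower_quasiIsoAt`): around a given degree the homology of the
  tower is eventually constant. With enough projectives, cocycles and primitives defined on a
  projective object lift through the degreewise surjective transition maps
  (`exists_lift_cocycle`, `exists_lift_primitive`), so that `I` has the homology of a late stage,
  which is that of `X`.
* `X ⟶ I` is a monomorphism in each degree `k`, since `X ⟶ K (n + 1)` is one as soon as `-n < k`.
-/

open CategoryTheory Limits

/-- A cochain complex `I` is dg-injective if each component is an injective module and
every chain map from an acyclic complex to `I` is nullhomotopic. -/
def IsDGInjective {R : Type} [Ring R] (I : CochainComplex (ModuleCat R) ℤ) : Prop :=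
  (∀ n : ℤ, Module.Injective R (I.X n)) ∧
    ∀ (Y : CochainComplex (ModuleCat R) ℤ), IsAcyclicComplex Y →
      ∀ f : Y ⟶ I, Nonempty (Homotopy f 0)

open Opposite CochainComplex ZeroObject

universe w v u

/-! ### Sections of towers -/

/-- In a tower of sets, an element of the stage `m` lifts to the limit if it can be lifted
stage by stage; the lifts can be kept in prescribed subsets `S n`. -/
lemma exists_limit_lift {F : ℕᵒᵖ ⥤ Type w} {c : Cone F} (hc : IsLimit c)
    (S : ∀ n : ℕ, Set (F.obj (op n))) (m : ℕ)
    (hS : ∀ n, m ≤ n → ∀ x ∈ S n, ∃ y ∈ S (n + 1), F.map (homOfLE n.le_succ).op y = x)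
    (x : F.obj (op m)) (hx : x ∈ S m) :
    ∃ y : c.pt, c.π.app (op m) y = x ∧ ∀ n, m ≤ n → c.π.app (op n) y ∈ S n := by
  choose g hgS hg using fun (j : ℕ) (x : S (m + j)) ↦ hS (m + j) (by lia) x.1 x.2
  let z : ∀ j : ℕ, S (m + j) := fun j ↦ Nat.rec ⟨x, hx⟩ (fun j y ↦ ⟨g j y, hgS j y⟩) j
  have hz (i j : ℕ) (h : i ≤ j) (h' : m + i ≤ m + j) :
      F.map (homOfLE h').op (z j).1 = (z i).1 := by
    induction j, h using Nat.le_induction with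
    | base => exact ConcreteCategory.congr_hom (F.map_id _) _
    | succ j hij ih =>
      have h₁ : m + i ≤ m + j := by lia
      rw [← ih h₁]
      have : (z j).1 = F.map (homOfLE (m + j).le_succ).op (z (j + 1)).1 := (hg j (z j)).symm
      rw [this]
      exact ConcreteCategory.congr_hom (F.map_comp (homOfLE (m + j).le_succ).op (homOfLE h₁).op) _
  let s : F.sections := ⟨fun n ↦ F.map (homOfLE (Nat.le_add_left n.unop m)).op (z n.unop).1, by
    rintro ⟨a⟩ ⟨b⟩ f
    have hba : b ≤ a := leOfHom f.unop
    dsimp only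
    rw [← hz b a hba (by lia)]
    change (F.map _ ≫ F.map _) _ = (F.map _ ≫ F.map _) _
    rw [← F.map_comp, ← F.map_comp]
    rfl⟩
  have hs (n : ℕ) : c.π.app (op n) ((Types.isLimitEquivSections hc).symm s) = s.1 (op n) :=
    Types.isLimitEquivSections_symm_apply hc s (op n)
  refine ⟨(Types.isLimitEquivSections hc).symm s, ?_, fun n hn ↦ ?_⟩
  · rw [hs]
    exact hz 0 m (by lia) _
  · obtain ⟨j, rfl⟩ := Nat.exists_eq_add_of_le hn
    rw [hs]
    have : s.1 (op (m + j)) = (z j).1 := hz j (m + j) (by lia) _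
    rw [this]
    exact (z j).2

variable {C : Type u} [Category.{v} C] [Abelian C]

/-! ### Lifting cocycles and primitives -/

section Projective
variable {K L : CochainComplex C ℤ} (p : K ⟶ L) [∀ n, Epi (p.f n)] {A : C} [Projective A]

/-- A cocycle lifts up to a coboundary because `p` is surjective on homology, and
the coboundary lifts because `p` is surjective in degree `i`. -/
lemma exists_lift_cocycle (i j k : ℤ) (hij : i + 1 = j) (hjk : j + 1 = k) [QuasiIsoAt p j]
    (z : A ⟶ L.X j) (hz : z ≫ L.d j k = 0) :
    ∃ z' : A ⟶ K.X j, z' ≫ K.d j k = 0 ∧ z' ≫ p.f j = z := by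
  have : Epi (HomologicalComplex.homologyMap p j) := inferInstance
  rw [HomologicalComplex.epi_homologyMap_iff_up_to_refinements p i j k
    (by simp; lia) (by simp; lia)] at this
  obtain ⟨A', π, _, c, hc, b, h⟩ := this z hz
  let s := Projective.factorThru (𝟙 A) π
  have hs : s ≫ π = 𝟙 A := Projective.factorThru_comp _ _
  let b' := Projective.factorThru (s ≫ b) (p.f i)
  have hb' : b' ≫ p.f i = s ≫ b := Projective.factorThru_comp _ _
  refine ⟨s ≫ c + b' ≫ K.d i j, by simp [hc], ?_⟩
  have := s ≫= h
  rw [reassoc_of% hs] at this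
  rw [this, Preadditive.add_comp, Category.assoc, Category.assoc, ← p.comm, reassoc_of% hb',
    Preadditive.comp_add]

/-- A primitive of the image of a cocycle `z` lifts to a primitive of `z`: by injectivity on
homology `z` has some primitive, and its image differs from `y` by a cocycle, which lifts. -/
lemma exists_lift_primitive (i j k l : ℤ) (hij : i + 1 = j) (hjk : j + 1 = k) (hkl : k + 1 = l)
    [QuasiIsoAt p j] [QuasiIsoAt p k]
    (z : A ⟶ K.X k) (hz : z ≫ K.d k l = 0) (y : A ⟶ L.X j) (hy : y ≫ L.d j k = z ≫ p.f k) :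
    ∃ y' : A ⟶ K.X j, y' ≫ K.d j k = z ∧ y' ≫ p.f j = y := by
  have : Mono (HomologicalComplex.homologyMap p k) := inferInstance
  rw [HomologicalComplex.mono_homologyMap_iff_up_to_refinements p j k l
    (by simp; lia) (by simp; lia)] at this
  obtain ⟨A', π, _, b, h⟩ := this z hz y hy.symm
  let s := Projective.factorThru (𝟙 A) π
  have hs : s ≫ π = 𝟙 A := Projective.factorThru_comp _ _
  have hb := s ≫= h
  rw [reassoc_of% hs] at hb
  obtain ⟨c, hc, hc'⟩ := exists_lift_cocycle p i j k hij hjk (y - s ≫ b ≫ p.f j) (by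
    simp [hy, hb])
  exact ⟨s ≫ b + c, by simp [hc, hb], by simp [hc']⟩

end Projective

/-! ### The tower attached to a complex -/

/-- Acyclic monomorphisms lift against degreewise epimorphisms `p` with injective kernel
out of a bounded below complex: degreewise lifts exist, and the obstruction to assembling them
to a chain map is a degree `1` cocycle from the acyclic complex `coker i` to `ker p`, which is
bounded below with injective components, hence K-injective. -/
lemma hasLift_of_fibration {A B X Y : CochainComplex C ℤ} (i : A ⟶ B) (p : X ⟶ Y)
    [Mono i] [QuasiIso i] (hp : degreewiseEpiWithInjectiveKernel p) (d : ℤ) [X.IsStrictlyGE d] :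
    HasLiftingProperty i p where
  sq_hasLift {t b} sq := by
    have sq' (n : ℤ) : CommSq (t.f n) (i.f n) (p.f n) (b.f n) :=
      (sq.map (HomologicalComplex.eval _ _ n))
    have (n : ℤ) : (sq' n).HasLift := by
      have := (hp n).hasLiftingProperty (i.f n)
      infer_instance
    let β : HomComplex.Cocycle (cokernel i) (kernel p) 1 :=
      Lifting.cocycle₁ sq (fun n ↦
        { l := (sq' n).lift, fac_left := (sq' n).fac_left, fac_right := (sq' n).fac_right })
        (cokernelIsCokernel i) (kernelIsKernel p) (hπ := by simp) (hι := by simp)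
    have (n : ℤ) : Injective ((kernel p).X n) :=
      Injective.of_iso
        (asIso (kernelComparison p (HomologicalComplex.eval _ _ n))).symm (hp n).2
    have : (kernel p).IsStrictlyGE d := by
      rw [isStrictlyGE_iff]
      intro i hi
      rw [IsZero.iff_id_eq_zero, ← cancel_mono ((kernel.ι p).f i)]
      apply (X.isZero_of_isStrictlyGE d i).eq_of_tgt
    have : (kernel p).IsKInjective := isKInjective_of_injective _ d
    have hse : (ShortComplex.mk _ _ (cokernel.condition i)).ShortExact :=
      { exact := ShortComplex.exact_cokernel i }
    obtain ⟨α, hα⟩ := IsKInjective.eq_δ_of_cocycle β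
      (hse.acyclic_X₃ (by dsimp; infer_instance)) 0 (by simp)
    exact Lifting.hasLift sq _ (cokernelIsCokernel _) (kernelIsKernel _) α hα

lemma mono_πTruncGE_f (X : CochainComplex C ℤ) (n k : ℤ) (h : n < k) :
    Mono ((X.πTruncGE n).f k) := by
  obtain ⟨j, rfl⟩ := Int.le.dest h.le
  refine (ComplexShape.Embedding.mono_liftExtend_f_iff (i := j) _ _
    (X.restrictionToTruncGE'_hasLift (ComplexShape.embeddingUpIntGE n)) (by simp)).2 ?_
  have := X.isIso_restrictionToTruncGE' (ComplexShape.embeddingUpIntGE n) j (by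
    rw [ComplexShape.boundaryGE_embeddingUpIntGE_iff]; lia)
  infer_instance

/-- The next stage of the tower: factor `truncGE X (d + 1) ⟶ L` as an acyclic monomorphism
followed by a degreewise epimorphism with injective kernel. -/
lemma exists_tower_step [EnoughInjectives C] {X L : CochainComplex C ℤ} (f : X ⟶ L) (d : ℤ)
    [L.IsStrictlyGE (d + 1)] :
    ∃ (K : CochainComplex C ℤ) (g : X ⟶ K) (p : K ⟶ L), K.IsStrictlyGE d ∧ g ≫ p = f ∧
      degreewiseEpiWithInjectiveKernel p ∧ (∀ k, d + 1 ≤ k → QuasiIsoAt g k) ∧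
      ∀ k, d + 1 < k → Mono (g.f k) := by
  have : L.IsStrictlyGE d := L.isStrictlyGE_of_ge d (d + 1) (by lia)
  obtain ⟨K, hK, i, p, _, _, hp, fac⟩ := Plus.modelCategoryQuillen.cm5a
    (truncGEMap f (d + 1) ≫ inv (L.πTruncGE (d + 1))) d
  refine ⟨K, X.πTruncGE (d + 1) ≫ i, p, hK, by simp [fac], hp, fun k hk ↦ ?_, fun k hk ↦ ?_⟩
  · have := X.quasiIsoAt_πTruncGE (d + 1) k hk
    infer_instance
  · have := mono_πTruncGE_f X (d + 1) k hk
    dsimp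
    infer_instance

/-- A tower `⋯ ⟶ K 2 ⟶ K 1 ⟶ K 0 = 0` under `X` of bounded below complexes whose transition maps
are degreewise epimorphisms with injective kernel, such that `K (n + 1)` computes the homology of
`X` in degrees `≥ -n`. -/
lemma exists_tower [EnoughInjectives C] (X : CochainComplex C ℤ) :
    ∃ (K : ℕ → CochainComplex C ℤ) (f : ∀ n, X ⟶ K n) (p : ∀ n, K (n + 1) ⟶ K n),
      IsZero (K 0) ∧ (∀ n : ℕ, (K n).IsStrictlyGE (-n)) ∧ (∀ n, f (n + 1) ≫ p n = f n) ∧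
      (∀ n, degreewiseEpiWithInjectiveKernel (p n)) ∧
      (∀ (n : ℕ) (k : ℤ), -n ≤ k → QuasiIsoAt (f (n + 1)) k) ∧
      ∀ (n : ℕ) (k : ℤ), -n < k → Mono ((f (n + 1)).f k) := by
  -- the data of one stage: a complex under `X`, concentrated in degrees `≥ -n`
  let St (n : ℕ) := { P : (Σ K : CochainComplex C ℤ, (X ⟶ K)) // P.1.IsStrictlyGE (-n : ℤ) }
  have step (n : ℕ) (P : St n) : ∃ (Q : St (n + 1)) (p : Q.1.1 ⟶ P.1.1), Q.1.2 ≫ p = P.1.2 ∧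
      degreewiseEpiWithInjectiveKernel p ∧ (∀ k, (-n : ℤ) ≤ k → QuasiIsoAt Q.1.2 k) ∧
      ∀ k, (-n : ℤ) < k → Mono (Q.1.2.f k) := by
    obtain ⟨⟨L, f⟩, hL⟩ := P
    have e : (-n : ℤ) = -((n + 1 : ℕ) : ℤ) + 1 := by push_cast; ring
    have : L.IsStrictlyGE (-((n + 1 : ℕ) : ℤ) + 1) := by rw [← e]; exact hL
    obtain ⟨K, g, p, hK, h₁, h₂, h₃, h₄⟩ := exists_tower_step f (-((n + 1 : ℕ) : ℤ))
    rw [← e] at h₃ h₄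
    exact ⟨⟨⟨K, g⟩, hK⟩, p, h₁, h₂, h₃, h₄⟩
  choose next p h₁ h₂ h₃ h₄ using step
  have hzero : IsZero (0 : CochainComplex C ℤ) := isZero_zero _
  let P₀ : St 0 := ⟨⟨0, 0⟩, by
    rw [isStrictlyGE_iff]
    intro i _
    exact (HomologicalComplex.eval C (ComplexShape.up ℤ) i).map_isZero hzero⟩
  let P : ∀ n, St n := fun n ↦ Nat.rec P₀ next n
  exact ⟨fun n ↦ (P n).1.1, fun n ↦ (P n).1.2, fun n ↦ p n (P n), hzero, fun n ↦ (P n).2,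
    fun n ↦ h₁ n (P n), fun n ↦ h₂ n (P n), fun n ↦ h₃ n (P n), fun n ↦ h₄ n (P n)⟩

/-! ### The limit of a tower of fibrations -/

section Tower

variable {F : ℕᵒᵖ ⥤ CochainComplex C ℤ} {c : Cone F}

/-- The transition map `F (n + 1) ⟶ F n` of a tower. -/
abbrev towerMap (F : ℕᵒᵖ ⥤ CochainComplex C ℤ) (n : ℕ) : F.obj (op (n + 1)) ⟶ F.obj (op n) :=
  F.map (homOfLE n.le_succ).op

/-- The projection from the vertex of a cone over a tower to the `n`-th stage; the constant
functor in the source of `c.π.app (op n)` is evaluated. -/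
def towerπ (c : Cone F) (n : ℕ) : c.pt ⟶ F.obj (op n) := c.π.app (op n)

lemma towerπ_map (n : ℕ) : towerπ c (n + 1) ≫ towerMap F n = towerπ c n :=
  c.w (homOfLE n.le_succ).op

lemma towerπ_map_f (n : ℕ) (k : ℤ) :
    (towerπ c (n + 1)).f k ≫ (towerMap F n).f k = (towerπ c n).f k := by
  rw [← HomologicalComplex.comp_f, towerπ_map]

/-- A family of conditions on morphisms to the stages of a tower which can be solved
stage by stage is solved by a morphism to the limit. -/
lemma exists_lift_tower (hc : IsLimit c) (B : CochainComplex C ℤ)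
    (S : ∀ n : ℕ, Set (B ⟶ F.obj (op n))) (m : ℕ)
    (hS : ∀ n, m ≤ n → ∀ x ∈ S n, ∃ y ∈ S (n + 1), y ≫ towerMap F n = x)
    (x : B ⟶ F.obj (op m)) (hx : x ∈ S m) :
    ∃ y : B ⟶ c.pt, y ≫ towerπ c m = x ∧ ∀ n, m ≤ n → y ≫ towerπ c n ∈ S n :=
  exists_limit_lift (isLimitOfPreserves (coyoneda.obj (op B)) hc) S m hS x hx

/-- The analogue of `exists_lift_tower` in a fixed degree. -/
lemma exists_lift_tower_f [HasLimitsOfShape ℕᵒᵖ C] (hc : IsLimit c) (k : ℤ) (B : C)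
    (S : ∀ n : ℕ, Set (B ⟶ (F.obj (op n)).X k)) (m : ℕ)
    (hS : ∀ n, m ≤ n → ∀ x ∈ S n, ∃ y ∈ S (n + 1), y ≫ (towerMap F n).f k = x)
    (x : B ⟶ (F.obj (op m)).X k) (hx : x ∈ S m) :
    ∃ y : B ⟶ c.pt.X k, y ≫ (towerπ c m).f k = x ∧
      ∀ n, m ≤ n → y ≫ (towerπ c n).f k ∈ S n :=
  exists_limit_lift (isLimitOfPreserves (coyoneda.obj (op B))
    (isLimitOfPreserves (HomologicalComplex.eval C (ComplexShape.up ℤ) k) hc)) S m hS x hx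

lemma tower_hom_ext (hc : IsLimit c) {A : CochainComplex C ℤ} {a b : A ⟶ c.pt}
    (h : ∀ n, a ≫ towerπ c n = b ≫ towerπ c n) : a = b :=
  hc.hom_ext fun ⟨n⟩ ↦ h n

/-- Morphisms to a component of the limit which agree at all late stages of the tower agree. -/
lemma tower_hom_ext_f [HasLimitsOfShape ℕᵒᵖ C] (hc : IsLimit c) (m : ℕ) (k : ℤ) {A : C}
    {a b : A ⟶ c.pt.X k}
    (h : ∀ n, m ≤ n → a ≫ (towerπ c n).f k = b ≫ (towerπ c n).f k) : a = b := by
  refine (isLimitOfPreserves (HomologicalComplex.eval C (ComplexShape.up ℤ) k) hc).hom_ext ?_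
  rintro ⟨n⟩
  change a ≫ (towerπ c n).f k = b ≫ (towerπ c n).f k
  have hw : towerπ c (m + n) ≫ F.map (homOfLE (Nat.le_add_left n m)).op = towerπ c n := c.w _
  rw [← hw, HomologicalComplex.comp_f, ← Category.assoc, h _ (Nat.le_add_right m n),
    Category.assoc]

/-- A map from an acyclic complex `Y` to the limit extends to the (contractible) cone of `𝟙 Y`,
by lifting the extension through the tower. -/
lemma tower_isKInjective (hc : IsLimit c) (hF₀ : IsZero (F.obj (op 0)))
    (hF : ∀ n : ℕ, (F.obj (op n)).IsStrictlyGE (-n))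
    (hp : ∀ n : ℕ, degreewiseEpiWithInjectiveKernel (towerMap F n)) :
    c.pt.IsKInjective where
  nonempty_homotopy_zero {Y} f hY := by
    let i : Y ⟶ mappingCone (𝟙 Y) := mappingCone.inr (𝟙 Y)
    have hi : Mono i := by
      have (n : ℤ) : Mono (i.f n) :=
        mono_of_mono_fac (h := 𝟙 _) (mappingCone.inr_f_snd_v (𝟙 Y) n)
      exact HomologicalComplex.mono_of_mono_f _ this
    have hi' : QuasiIso i := by
      let h : Homotopy (𝟙 (mappingCone (𝟙 Y))) 0 :=
        mappingCone.liftHomotopy _ _ _ (mappingCone.snd _) 0 (by simp) (by simp)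
      rw [quasiIso_iff]
      intro n
      rw [quasiIsoAt_iff_exactAt i n (hY n), HomologicalComplex.exactAt_iff_isZero_homology,
        IsZero.iff_id_eq_zero, ← HomologicalComplex.homologyMap_id, h.homologyMap_eq,
        HomologicalComplex.homologyMap_zero]
    obtain ⟨g, -, hg⟩ := exists_lift_tower hc (mappingCone (𝟙 Y))
      (fun n ↦ {g | i ≫ g = f ≫ towerπ c n}) 0 (fun n _ x hx ↦ by
        have := hF (n + 1)
        have := hasLift_of_fibration i _ (hp n) (-((n + 1 : ℕ) : ℤ))
        have sq : CommSq (f ≫ towerπ c (n + 1)) i (towerMap F n) x := ⟨by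
          rw [Category.assoc, towerπ_map]; exact hx.symm⟩
        exact ⟨sq.lift, sq.fac_left, sq.fac_right⟩) 0 (hF₀.eq_of_tgt _ _)
    have hfg : i ≫ g = f := tower_hom_ext hc (fun n ↦ by
      rw [Category.assoc]
      exact hg n (Nat.zero_le n))
    have h := (HomologicalComplex.homotopyCofiber.inrCompHomotopy (𝟙 Y)
      (fun j ↦ ⟨j - 1, by simp⟩)).compRight g
    exact ⟨(Homotopy.ofEq (by rw [← hfg, Category.id_comp]; rfl)).trans
      (h.trans (Homotopy.ofEq zero_comp))⟩

/-- Each component of the limit is injective: extensions along a monomorphism are lifted through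
the tower, whose transition maps are degreewise epimorphisms with injective kernel. -/
lemma tower_injective [HasLimitsOfShape ℕᵒᵖ C] (hc : IsLimit c) (hF₀ : IsZero (F.obj (op 0)))
    (hp : ∀ n : ℕ, degreewiseEpiWithInjectiveKernel (towerMap F n))
    (k : ℤ) : Injective (c.pt.X k) where
  factors {A B} f i _ := by
    obtain ⟨g, -, hg⟩ := exists_lift_tower_f hc k B
      (fun n ↦ {g | i ≫ g = f ≫ (towerπ c n).f k}) 0 (fun n _ x hx ↦ by
        have := (hp n k).hasLiftingProperty i
        have sq : CommSq (f ≫ (towerπ c (n + 1)).f k) i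
          ((towerMap F n).f k) x := ⟨by
            rw [Category.assoc, towerπ_map_f]; exact hx.symm⟩
        exact ⟨sq.lift, sq.fac_left, sq.fac_right⟩) 0
        (((HomologicalComplex.eval C _ k).map_isZero hF₀).eq_of_tgt _ _)
    refine ⟨g, tower_hom_ext_f hc 0 k fun n hn ↦ ?_⟩
    rw [Category.assoc]
    exact hg n hn

/-- If the transition maps of the tower are degreewise epimorphisms and, from stage `m` on,
isomorphisms on homology in degrees `≥ j - 1`, then the homology of the limit in degree `j` is that
of stage `m`: cocycles and primitives, with values on a projective cover, are lifted
through the tower. -/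
lemma tower_quasiIsoAt [HasLimitsOfShape ℕᵒᵖ C] [EnoughProjectives C] (hc : IsLimit c)
    (hp : ∀ (n : ℕ) (k : ℤ), Epi ((towerMap F n).f k)) (m : ℕ) (j : ℤ)
    (hq : ∀ n : ℕ, m ≤ n → ∀ k, j - 1 ≤ k → QuasiIsoAt (towerMap F n) k) :
    QuasiIsoAt (towerπ c m) j := by
  rw [quasiIsoAt_iff_isIso_homologyMap]
  have hmono : Mono (HomologicalComplex.homologyMap (towerπ c m) j) := by
    rw [HomologicalComplex.mono_homologyMap_iff_up_to_refinements _ (j - 1) j (j + 1)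
      (by simp) (by simp)]
    intro A x hx y hy
    refine ⟨Projective.over A, Projective.π A, inferInstance, ?_⟩
    obtain ⟨g, -, hg⟩ := exists_lift_tower_f hc (j - 1)
      (Projective.over A)
      (fun n ↦ {g | g ≫ (F.obj (op n)).d (j - 1) j =
        (Projective.π A ≫ x) ≫ (towerπ c n).f j}) m (fun n hn y hy ↦ by
          have := hq n hn (j - 1) le_rfl
          have := hq n hn j (by lia)
          have := hp n
          obtain ⟨y', h₁, h₂⟩ := exists_lift_primitive (towerMap F n)
            (j - 2) (j - 1) j (j + 1) (by lia) (by lia) rfl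
            ((Projective.π A ≫ x) ≫ (towerπ c (n + 1)).f j) (by simp [reassoc_of% hx]) y (by
              rw [Category.assoc _ _ ((towerMap F n).f j), towerπ_map_f]; exact hy)
          exact ⟨y', h₁, h₂⟩) (Projective.π A ≫ y) (by
            change (Projective.π A ≫ y) ≫ _ = _
            rw [Category.assoc, Category.assoc, hy])
    refine ⟨g, (tower_hom_ext_f hc m j fun n hn ↦ ?_).symm⟩
    rw [Category.assoc, ← HomologicalComplex.Hom.comm, ← Category.assoc]
    exact hg n hn
  have hepi : Epi (HomologicalComplex.homologyMap (towerπ c m) j) := by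
    rw [HomologicalComplex.epi_homologyMap_iff_up_to_refinements _ (j - 1) j (j + 1)
      (by simp) (by simp)]
    intro A z hz
    obtain ⟨g, h, hg⟩ := exists_lift_tower_f hc j
      (Projective.over A)
      (fun n ↦ {g | g ≫ (F.obj (op n)).d j (j + 1) = 0}) m (fun n hn z hz ↦ by
          have := hq n hn j (by lia)
          have := hp n
          obtain ⟨z', h₁, h₂⟩ := exists_lift_cocycle (towerMap F n)
            (j - 1) j (j + 1) (by lia) rfl z hz
          exact ⟨z', h₁, h₂⟩) (Projective.π A ≫ z) (by
            change (Projective.π A ≫ z) ≫ _ = _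
            rw [Category.assoc, hz, comp_zero])
    refine ⟨Projective.over A, Projective.π A, inferInstance, g,
      tower_hom_ext_f hc m (j + 1) fun n hn ↦ ?_, 0, ?_⟩
    · rw [Category.assoc, ← HomologicalComplex.Hom.comm, ← Category.assoc, zero_comp]
      exact hg n hn
    · rw [zero_comp, add_zero]
      exact h.symm
  exact isIso_of_mono_of_epi _

end Tower

/-- Spaltenstein's theorem: a complex embeds quasi-isomorphically into a K-injective complex
with injective components, namely the limit of the tower of `exists_tower`. -/
lemma exists_isKInjective_resolution [EnoughInjectives C] [EnoughProjectives C]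
    [HasLimitsOfShape ℕᵒᵖ C] (X : CochainComplex C ℤ) :
    ∃ (I : CochainComplex C ℤ) (i : X ⟶ I), I.IsKInjective ∧ (∀ n, Injective (I.X n)) ∧
      (∀ n, Mono (i.f n)) ∧ QuasiIso i := by
  obtain ⟨K, f, p, hK₀, hK, hfp, hp, hf, hf'⟩ := exists_tower X
  let F := Functor.ofOpSequence p
  have hF (n : ℕ) : towerMap F n = p n :=
    Functor.ofOpSequence_map_homOfLE_succ p n
  have hp' (n : ℕ) : degreewiseEpiWithInjectiveKernel (towerMap F n) := by
    rw [hF]; exact hp n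
  let hc : IsLimit (limit.cone F) := limit.isLimit F
  obtain ⟨i, -, hi⟩ := exists_lift_tower hc X (fun n ↦ {f n}) 0
    (fun n _ x hx ↦ ⟨f (n + 1), rfl, by
      rw [Set.mem_singleton_iff.1 hx]
      change f (n + 1) ≫ towerMap F n = f n
      rw [hF]; exact hfp n⟩) (f 0) rfl
  replace hi (n : ℕ) : i ≫ towerπ (limit.cone F) n = f n := hi n (Nat.zero_le n)
  refine ⟨(limit.cone F).pt, i, tower_isKInjective hc hK₀ hK hp', tower_injective hc hK₀ hp',
    fun k ↦ ?_, ⟨fun j ↦ ?_⟩⟩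
  · have : Mono ((i ≫ towerπ (limit.cone F) (k.natAbs + 2)).f k) := by
      rw [hi]; exact hf' (k.natAbs + 1) k (by lia)
    exact mono_of_mono_fac
      (HomologicalComplex.comp_f i (towerπ (limit.cone F) (k.natAbs + 2)) k).symm
  · let m : ℕ := j.natAbs + 2
    -- stage `n` computes the homology of `X` in degrees `≥ 1 - n`, and `1 - m ≤ j - 1`
    have hfm (n : ℕ) (hn : m ≤ n) (k : ℤ) (hk : j - 1 ≤ k) : QuasiIsoAt (f n) k := by
      obtain ⟨n, rfl⟩ := Nat.exists_eq_add_of_le' (show 1 ≤ n by lia)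
      exact hf n k (by lia)
    have : QuasiIsoAt (towerπ (limit.cone F) m) j := by
      refine tower_quasiIsoAt hc (fun n k ↦ (hp' n k).1) m j fun n hn k hk ↦ ?_
      rw [hF]
      have h₁ := hfm n hn k hk
      have h₂ := hfm (n + 1) (by lia) k hk
      rw [← hfp] at h₁
      exact quasiIsoAt_of_comp_left (f (n + 1)) (p n) k
    have h : QuasiIsoAt (i ≫ towerπ (limit.cone F) m) j := by
      rw [hi]; exact hfm m le_rfl j (by lia)
    exact quasiIsoAt_of_comp_right i (towerπ (limit.cone F) m) j

/-- Every cochain complex admits a dg-injective resolution, i.e. a degreewise injective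
quasi-isomorphism into a dg-injective complex. -/
theorem exists_dgInjective_resolution {R : Type} [Ring R]
    (X : CochainComplex (ModuleCat R) ℤ) :
    ∃ (I : CochainComplex (ModuleCat R) ℤ) (i : X ⟶ I),
      IsDGInjective I ∧ (∀ n : ℤ, Function.Injective (i.f n)) ∧ QuasiIso i := by
  obtain ⟨I, i, hI, hinj, hi, hq⟩ := exists_isKInjective_resolution X
  refine ⟨I, i, ⟨fun n ↦ ?_, fun Y hY f ↦ ?_⟩, fun n ↦ ?_, hq⟩
  · exact (Module.injective_iff_injective_object R (I.X n)).2 (hinj n)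
  · exact IsKInjective.nonempty_homotopy_zero f
      (fun n ↦ (HomologicalComplex.exactAt_iff_isZero_homology _ _).2 (hY n))
  · exact (ModuleCat.mono_iff_injective _).1 (hi n)
end

section
/- Let R be a ring. The canonical localization functor Q : K(R) → D(R) from the homotopy category of cochain complexes of R-modules to the derived category admits both a left adjoint and a right adjoint. (These adjoints are given by dg-projective and dg-injective resolutions, and together with the inclusion of the acyclic complexes they form the standard recollement of K(R).) -/
/-!
The localization functor has a right (resp. left) adjoint as soon as every complex is
quasi-isomorphic to a K-injective (resp. K-projective) one, because `Qh` is bijective on morphisms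
into K-injective and out of K-projective complexes. So the point is the existence of unbounded
resolutions, obtained here for an abelian category `C` with enough projectives, enough injectives
and countable products; the K-projective case is the K-injective case in `Cᵒᵖ`.

In `K(C)`, let `P` be the class of acyclic complexes and `G` that of projective objects placed in
a single degree, so that an object right orthogonal to `G` is acyclic. Every complex `Y` maps to
a product `E` of injective objects placed in single degrees, which is right orthogonal to `P`, by
embedding the cokernel of each differential into an injective object. The fibre `W ⟶ Y` of
`Y ⟶ E` induces zero on `Hom(X, -)` for `X` in `G`, and bijections on `Hom(N, -)` for `N` in `P`
(`step_homotopyCategory`). Iterating gives a tower `⋯ ⟶ W₂ ⟶ W₁ ⟶ W₀ = Y`. Its homotopy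
limit `A`, the fibre of `1 - shift` on `∏ Wₙ`, is acyclic because the shift is invisible to `G`,
and `Hom(N, A) ≅ Hom(N, Y)` for acyclic `N` because the tower is constant on `Hom(N, -)`. Hence
the cone of `A ⟶ Y` is K-injective and `Y` maps quasi-isomorphically to it
(`exists_triangle_of_tower`).
-/

open CategoryTheory Limits

/-! ### Towers in triangulated categories -/

section Abstract
open Pretriangulated

variable {T : Type*} [Category T] [HasZeroObject T] [HasShift T ℤ] [Preadditive T]
  [∀ n : ℤ, (shiftFunctor T n).Additive] [Pretriangulated T]

/-- If every morphism from an object of a shift-stable class `Q` to the third vertex of a triangle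
lifts to the second, then `Hom(N, -)` is injective on the first morphism for `N` in `Q`. -/
lemma eq_zero_of_lifts {Q : ObjectProperty T} [Q.IsStableUnderShift ℤ]
    {X Y Z : T} {u : X ⟶ Y} {v : Y ⟶ Z} {w : Z ⟶ X⟦(1 : ℤ)⟧}
    (hT : Triangle.mk u v w ∈ distTriang T)
    (hv : ∀ ⦃N : T⦄, Q N → ∀ z : N ⟶ Z, ∃ y : N ⟶ Y, y ≫ v = z)
    {N : T} (hN : Q N) (a : N ⟶ X) (ha : a ≫ u = 0) : a = 0 := by
  have hz : (shiftFunctor T (1 : ℤ)).map a ≫ (shiftFunctor T (1 : ℤ)).map u = 0 := by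
    rw [← Functor.map_comp, ha, Functor.map_zero]
  obtain ⟨g, hg⟩ : ∃ g : N⟦(1 : ℤ)⟧ ⟶ Z, (shiftFunctor T (1 : ℤ)).map a = g ≫ w :=
    Triangle.coyoneda_exact₁ _ hT _ hz
  obtain ⟨y, rfl⟩ := hv (Q.le_shift 1 _ hN) g
  apply (shiftFunctor T (1 : ℤ)).map_injective
  have h0 : v ≫ w = 0 := comp_distTriang_mor_zero₂₃ _ hT
  rw [hg, Functor.map_zero, Category.assoc, h0, comp_zero]

/-- A morphism which becomes bijective after `Hom(N, -)` for all `N` in a shift-stable class `Q`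
has its cone in the right orthogonal of `Q`. -/
lemma rightOrthogonal_cone {Q : ObjectProperty T} [Q.IsStableUnderShift ℤ]
    {X Y Z : T} {u : X ⟶ Y} {v : Y ⟶ Z} {w : Z ⟶ X⟦(1 : ℤ)⟧}
    (hT : Triangle.mk u v w ∈ distTriang T)
    (hsurj : ∀ ⦃N : T⦄, Q N → ∀ y : N ⟶ Y, ∃ x : N ⟶ X, x ≫ u = y)
    (hinj : ∀ ⦃N : T⦄, Q N → ∀ x : N ⟶ X, x ≫ u = 0 → x = 0) :
    Q.rightOrthogonal Z := by
  have hT' := inv_rot_of_distTriang _ hT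
  have h : Q.rightOrthogonal (Z⟦(-1 : ℤ)⟧) := fun N a hN ↦
    eq_zero_of_lifts hT' hsurj hN a
      (hinj hN _ ((Category.assoc _ _ _).trans
        ((congrArg (a ≫ ·) (comp_distTriang_mor_zero₁₂ _ hT')).trans comp_zero)))
  exact Q.rightOrthogonal.prop_of_iso ((shiftEquiv T (1 : ℤ)).counitIso.app Z)
    (Q.rightOrthogonal.le_shift 1 _ h)

/-- The tower argument: the fibre `A` of `1 - shift` on `∏ W n` lies in `P`, because the shift
acts by zero on `Hom(X, -)` for `X` in `G`; and `Hom(N, A) ≅ Hom(N, W 0)` for `N` in `P`, because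
the tower `Hom(N, W n)` is then constant. -/
lemma exists_triangle_of_tower [HasProductsOfShape ℕ T] {P G : ObjectProperty T}
    [P.IsStableUnderShift ℤ] [G.IsStableUnderShift ℤ] (hG : G.rightOrthogonal ≤ P)
    (W : ℕ → T) (w : ∀ n, W (n + 1) ⟶ W n)
    (w_surj : ∀ ⦃N : T⦄, P N → ∀ (n : ℕ) (x : N ⟶ W n), ∃ y : N ⟶ W (n + 1), y ≫ w n = x)
    (w_inj : ∀ ⦃N : T⦄, P N → ∀ (n : ℕ) (x : N ⟶ W (n + 1)), x ≫ w n = 0 → x = 0)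
    (hs : ∀ ⦃X : T⦄, G X → ∀ (n : ℕ) (g : X ⟶ W (n + 1)), g ≫ w n = 0) :
    ∃ (A I : T) (a : A ⟶ W 0) (b : W 0 ⟶ I) (c : I ⟶ A⟦(1 : ℤ)⟧),
      Triangle.mk a b c ∈ distTriang T ∧ P A ∧ P.rightOrthogonal I := by
  let sh : ∏ᶜ W ⟶ ∏ᶜ W := Pi.lift fun n ↦ Pi.π W (n + 1) ≫ w n
  have sh_π {N : T} (x : N ⟶ ∏ᶜ W) (n : ℕ) :
      (x ≫ sh) ≫ Pi.π W n = (x ≫ Pi.π W (n + 1)) ≫ w n := by simp [sh]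
  have sh_G {X : T} (hX : G X) (g : X ⟶ ∏ᶜ W) : g ≫ sh = 0 := by
    refine Pi.hom_ext _ _ fun n ↦ ?_
    rw [sh_π, zero_comp]
    exact hs hX _ _
  obtain ⟨A, α, γ, hA⟩ := distinguished_cocone_triangle₁ (𝟙 _ - sh)
  have hα : α ≫ (𝟙 _ - sh) = 0 := comp_distTriang_mor_zero₁₂ _ hA
  have hα' {N : T} (x : N ⟶ A) : (x ≫ α) ≫ sh = x ≫ α := by
    have := congrArg (x ≫ ·) hα
    simp only [Preadditive.comp_sub, Category.comp_id, comp_zero, sub_eq_zero] at this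
    rw [Category.assoc, ← this]
  -- `1 - sh` is surjective on `Hom(N, -)` for `N` in `P`, because the tower is then constant.
  have surj_P ⦃N : T⦄ (hN : P N) (z : N ⟶ ∏ᶜ W) : ∃ y : N ⟶ ∏ᶜ W, y ≫ (𝟙 _ - sh) = z := by
    choose l hl using fun (n : ℕ) (x : N ⟶ W n) ↦ w_surj hN n x
    let y : ∀ n, N ⟶ W n := fun n ↦ Nat.rec 0 (fun n x ↦ l n (x - z ≫ Pi.π W n)) n
    have hy (n : ℕ) : y (n + 1) ≫ w n = y n - z ≫ Pi.π W n := hl _ _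
    refine ⟨Pi.lift y, Pi.hom_ext _ _ fun n ↦ ?_⟩
    rw [Preadditive.comp_sub, Preadditive.sub_comp, sh_π]
    simp [hy]
  have a_surj ⦃N : T⦄ (hN : P N) (x : N ⟶ W 0) : ∃ y : N ⟶ A, y ≫ α ≫ Pi.π W 0 = x := by
    choose l hl using fun (n : ℕ) (x : N ⟶ W n) ↦ w_surj hN n x
    let y : ∀ n, N ⟶ W n := fun n ↦ Nat.rec x (fun n x ↦ l n x) n
    have hy (n : ℕ) : y (n + 1) ≫ w n = y n := hl _ _
    have hz : Pi.lift y ≫ (𝟙 _ - sh) = 0 := by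
      refine Pi.hom_ext _ _ fun n ↦ ?_
      rw [Preadditive.comp_sub, Preadditive.sub_comp, sh_π]
      simp [hy]
    obtain ⟨t, ht⟩ : ∃ t : N ⟶ A, Pi.lift y = t ≫ α := Triangle.coyoneda_exact₂ _ hA _ hz
    exact ⟨t, by rw [← Category.assoc, ← ht, Pi.lift_π]; rfl⟩
  have a_inj ⦃N : T⦄ (hN : P N) (x : N ⟶ A) (hx : x ≫ α ≫ Pi.π W 0 = 0) : x = 0 := by
    refine eq_zero_of_lifts hA surj_P hN x (Pi.hom_ext _ _ fun n ↦ ?_)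
    rw [zero_comp]
    induction n with
    | zero => simpa using hx
    | succ n ih => exact w_inj hN n _ (by rw [← sh_π, hα', ih])
  obtain ⟨I, b, c, hI⟩ := distinguished_cocone_triangle (α ≫ Pi.π W 0)
  refine ⟨A, I, _, b, c, hI, hG _ fun X g hX ↦ ?_, rightOrthogonal_cone hI a_surj a_inj⟩
  refine eq_zero_of_lifts hA (fun N hN z ↦ ⟨z, ?_⟩) hX g ?_
  · rw [Preadditive.comp_sub, sh_G hN, Category.comp_id, sub_zero]
  · rw [← hα', sh_G hX]

/-- If every object `M` has a triangle `W ⟶ M ⟶ E` with `E` right orthogonal to `P` and `W ⟶ M`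
invisible to `G`, iterating `M ↦ W` yields a tower to which `exists_triangle_of_tower` applies. -/
lemma exists_triangle_of_step [HasProductsOfShape ℕ T] {P G : ObjectProperty T}
    [P.IsStableUnderShift ℤ] [G.IsStableUnderShift ℤ] (hG : G.rightOrthogonal ≤ P)
    (step : ∀ M : T, ∃ (W E : T) (w : W ⟶ M) (e : M ⟶ E) (d : E ⟶ W⟦(1 : ℤ)⟧),
      Triangle.mk w e d ∈ distTriang T ∧ P.rightOrthogonal E ∧
        ∀ ⦃X : T⦄, G X → ∀ g : X ⟶ W, g ≫ w = 0) (M : T) :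
    ∃ (A I : T) (a : A ⟶ M) (b : M ⟶ I) (c : I ⟶ A⟦(1 : ℤ)⟧),
      Triangle.mk a b c ∈ distTriang T ∧ P A ∧ P.rightOrthogonal I := by
  choose S E s e d hT hE hs using step
  have s_surj (X : T) ⦃N : T⦄ (hN : P N) (x : N ⟶ X) : ∃ y : N ⟶ S X, y ≫ s X = x := by
    obtain ⟨y, hy⟩ := Triangle.coyoneda_exact₂ _ (hT X) x (hE _ _ hN)
    exact ⟨y, hy.symm⟩
  have s_inj (X : T) ⦃N : T⦄ (hN : P N) (x : N ⟶ S X) (hx : x ≫ s X = 0) : x = 0 :=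
    eq_zero_of_lifts (hT X) (fun N hN z ↦ ⟨0, by rw [zero_comp, hE _ z hN]⟩) hN x hx
  exact exists_triangle_of_tower hG (fun n ↦ Nat.rec M (fun _ X ↦ S X) n) (fun n ↦ s _)
    (fun N hN n x ↦ s_surj _ hN x) (fun N hN n x ↦ s_inj _ hN x) (fun X hX n g ↦ hs _ hX g)
end Abstract

/-! ### Products in the homotopy category -/

section Products
variable {C : Type*} [Category C] [Preadditive C] {ι : Type*} (c : ComplexShape ι)

/-- Two morphisms to a product of complexes agree up to homotopy as soon as their components do:
the homotopies between the components are the components of a homotopy. -/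
lemma homotopyCategory_hom_ext_pi {J : Type*} [HasProductsOfShape J C]
    (K : J → HomologicalComplex C c) {X : HomotopyCategory C c}
    (f g : X ⟶ (HomotopyCategory.quotient C c).obj (∏ᶜ K))
    (h : ∀ j, f ≫ (HomotopyCategory.quotient C c).map (Pi.π K j) =
      g ≫ (HomotopyCategory.quotient C c).map (Pi.π K j)) : f = g := by
  obtain ⟨X, rfl⟩ := HomotopyCategory.quotient_obj_surjective X
  obtain ⟨f, rfl⟩ := (HomotopyCategory.quotient C c).map_surjective f
  obtain ⟨g, rfl⟩ := (HomotopyCategory.quotient C c).map_surjective g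
  simp only [← Functor.map_comp] at h
  let H (j : J) := HomotopyCategory.homotopyOfEq _ _ (h j)
  have hK (i : ι) : IsLimit (Fan.mk ((∏ᶜ K).X i) fun j ↦ (Pi.π K j).f i) :=
    (isLimitMapConeFanMkEquiv (HomologicalComplex.eval C c i) K (Pi.π K))
      (isLimitOfPreserves (HomologicalComplex.eval C c i) (productIsProduct K))
  let s (p q : ι) : X.X p ⟶ (∏ᶜ K).X q := Fan.IsLimit.lift (hK q) fun j ↦ (H j).hom p q
  have hs (p q : ι) (j : J) : s p q ≫ (Pi.π K j).f q = (H j).hom p q :=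
    Fan.IsLimit.fac (hK q) _ j
  refine HomotopyCategory.eq_of_homotopy _ _
    { hom := s
      zero := fun p q hpq ↦ Fan.IsLimit.hom_ext (hK q) _ _ fun j ↦ ?_
      comm := fun i ↦ Fan.IsLimit.hom_ext (hK i) _ _ fun j ↦ ?_ }
  · change s p q ≫ (Pi.π K j).f q = 0 ≫ _
    rw [hs, zero_comp, (H j).zero p q hpq]
  · have := (H j).comm i
    change f.f i ≫ (Pi.π K j).f i = (_ + _ + _) ≫ (Pi.π K j).f i
    simp only [HomologicalComplex.comp_f] at this
    rw [this, Preadditive.add_comp, Preadditive.add_comp]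
    congr 2
    · simp [dNext, hs]
    · simp [prevD, ← hs]

/-- Products of complexes remain products in the homotopy category. -/
instance hasProducts_homotopyCategory (J : Type*) [HasProductsOfShape J C] :
    HasProductsOfShape J (HomotopyCategory C c) := by
  suffices ∀ F : J → HomotopyCategory C c, HasProduct F from
    ⟨fun F ↦ hasLimit_of_iso (Discrete.natIsoFunctor (F := F)).symm⟩
  intro F
  let K (j : J) : HomologicalComplex C c := (F j).as
  let c₀ : Fan F := Fan.mk ((HomotopyCategory.quotient C c).obj (∏ᶜ K))
    fun j ↦ (HomotopyCategory.quotient C c).map (Pi.π K j)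
  have fac {X : HomotopyCategory C c} (f : ∀ j, X ⟶ F j) (j : J) :
      (HomotopyCategory.quotient C c).map (Pi.lift fun j ↦ (f j).out) ≫
        (HomotopyCategory.quotient C c).map (Pi.π K j) = f j := by
    refine ((HomotopyCategory.quotient C c).map_comp _ _).symm.trans ?_
    rw [Pi.lift_π]
    exact HomotopyCategory.quotient_map_out _
  exact ⟨⟨c₀, Fan.IsLimit.mk _
    (fun f ↦ (HomotopyCategory.quotient C c).map (Pi.lift fun j ↦ (f.proj j).out))
    (fun f j ↦ fac f.proj j)
    (fun f m hm ↦ homotopyCategory_hom_ext_pi c K _ _ fun j ↦ (hm j).trans (fac f.proj j).symm)⟩⟩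
end Products

/-! ### Complexes concentrated in one degree -/

section Concrete
open Pretriangulated
variable {C : Type*} [Category C] [Abelian C]

local notation "quotK" => HomotopyCategory.quotient C (ComplexShape.up ℤ)
local notation "singleK" => HomologicalComplex.single C (ComplexShape.up ℤ)

/-- A morphism from a complex `A` concentrated in degree `n` is null-homotopic if and only if the
corresponding morphism `A ⟶ K.X n` lifts along the differential `K.X (n - 1) ⟶ K.X n`. -/
lemma quotient_map_fromSingle_eq_zero_iff {A : C} {n : ℤ} {K : CochainComplex C ℤ}
    (f : (singleK n).obj A ⟶ K) :
    (quotK).map f = 0 ↔ ∃ h : A ⟶ K.X (n - 1), h ≫ K.d (n - 1) n =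
      (HomologicalComplex.singleObjXSelf (ComplexShape.up ℤ) n A).inv ≫ f.f n := by
  constructor
  · intro h
    have H := HomotopyCategory.homotopyOfEq f 0 (by rw [h, Functor.map_zero])
    refine ⟨(HomologicalComplex.singleObjXSelf (ComplexShape.up ℤ) n A).inv ≫ H.hom n (n - 1), ?_⟩
    have := H.comm n
    rw [dNext_eq H.hom (show (ComplexShape.up ℤ).Rel n (n + 1) from rfl),
      prevD_eq H.hom (show (ComplexShape.up ℤ).Rel (n - 1) n by simp)] at this
    simp [this]
  · rintro ⟨h, hh⟩
    rw [← Functor.map_zero]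
    refine HomotopyCategory.eq_of_homotopy _ _ ((Homotopy.ofEq ?_).trans (Homotopy.nullHomotopy'
      (C := (singleK n).obj A) (D := K)
      fun i j hij ↦ if hi : i = n then
        (HomologicalComplex.singleObjXIsoOfEq (ComplexShape.up ℤ) n A i hi).hom ≫ h ≫
          (K.XIsoOfEq (show n - 1 = j by simp at hij; omega)).hom else 0))
    apply HomologicalComplex.from_single_hom_ext
    rw [Homotopy.nullHomotopicMap'_f (k₂ := n - 1) (k₁ := n) (k₀ := n + 1) (by simp) (by simp)]
    rw [← cancel_epi (HomologicalComplex.singleObjXSelf (ComplexShape.up ℤ) n A).inv, ← hh]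
    simp [HomologicalComplex.singleObjXSelf]

lemma f_eq_zero_of_quotient_map_single_eq_zero {A B : C} {n : ℤ}
    (f : (singleK n).obj A ⟶ (singleK n).obj B) (hf : (quotK).map f = 0) : f.f n = 0 := by
  obtain ⟨h, hh⟩ := (quotient_map_fromSingle_eq_zero_iff f).1 hf
  rw [← cancel_epi (HomologicalComplex.singleObjXSelf (ComplexShape.up ℤ) n A).inv, ← hh]
  simp

variable (C) in
/-- The class of objects of the homotopy category isomorphic to a projective object placed in a
single degree; it detects acyclicity. -/
def singleProjective : ObjectProperty (HomotopyCategory C (ComplexShape.up ℤ)) :=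
  fun X ↦ ∃ (A : C) (n : ℤ), Projective A ∧ Nonempty (X ≅ (quotK).obj ((singleK n).obj A))

instance : (singleProjective C).IsStableUnderShift ℤ where
  isStableUnderShiftBy a :=
    ⟨fun X ⟨A, n, hA, ⟨e⟩⟩ ↦ ⟨A, n - a, hA, ⟨(shiftFunctor _ a).mapIso e ≪≫
      ((HomotopyCategory.singleFunctors C).shiftIso a (n - a) n (by omega)).app A⟩⟩⟩

/-- Testing a complex against projective objects mapping onto its cycles detects acyclicity. -/
lemma rightOrthogonal_singleProjective_le [EnoughProjectives C] :
    (singleProjective C).rightOrthogonal ≤ HomotopyCategory.subcategoryAcyclic C := by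
  intro X hX
  obtain ⟨K, rfl⟩ := HomotopyCategory.quotient_obj_surjective X
  rw [HomotopyCategory.quotient_obj_mem_subcategoryAcyclic_iff_exactAt]
  intro n
  let f : (singleK n).obj (Projective.over (K.cycles n)) ⟶ K :=
    HomologicalComplex.mkHomFromSingle (Projective.π _ ≫ K.iCycles n) (by simp)
  obtain ⟨h, hh⟩ := (quotient_map_fromSingle_eq_zero_iff f).1
    (hX _ ⟨_, n, inferInstance, ⟨Iso.refl _⟩⟩)
  have hf : h ≫ K.d (n - 1) n = Projective.π _ ≫ K.iCycles n := by simp [hh, f]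
  rw [HomologicalComplex.exactAt_iff_isZero_homology, IsZero.iff_id_eq_zero,
    ← cancel_epi (K.homologyπ n), ← cancel_epi (Projective.π (K.cycles n))]
  have : Projective.π _ = h ≫ K.toCycles (n - 1) n := by
    rw [← cancel_mono (K.iCycles n)]; simp [hf]
  simp [this]

lemma rightOrthogonal_pi {T : Type*} [Category T] [HasZeroMorphisms T] (P : ObjectProperty T)
    {J : Type*} (F : J → T) [HasProduct F] (hF : ∀ j, P.rightOrthogonal (F j)) :
    P.rightOrthogonal (∏ᶜ F) :=
  fun _ f hX ↦ Pi.hom_ext _ _ fun j ↦ by rw [hF j (f ≫ Pi.π F j) hX, zero_comp]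

lemma isKInjective_single {A : C} [Injective A] (n : ℤ) :
    CochainComplex.IsKInjective ((singleK n).obj A) := by
  have (i : ℤ) : Injective (((singleK n).obj A).X i) := by
    by_cases hi : i = n
    · exact Injective.of_iso (HomologicalComplex.singleObjXIsoOfEq _ n A i hi).symm ‹_›
    · exact (HomologicalComplex.isZero_single_obj_X _ n A i hi).injective
  have : CochainComplex.IsStrictlyGE ((singleK n).obj A) n := by
    rw [CochainComplex.isStrictlyGE_iff]
    exact fun i hi ↦ HomologicalComplex.isZero_single_obj_X _ n A i hi.ne
  exact CochainComplex.isKInjective_of_injective _ n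

/-- The basic step: `E` is the product over `n` of injective objects containing `Y.opcycles n`,
placed in degree `n`. If `A` is projective in degree `n` and `A ⟶ Y` dies in `E`, then `A ⟶ Y.X n` dies in
`Y.opcycles n`, so it lifts along `Y.d (n - 1) n` and `A ⟶ Y` is null-homotopic. -/
lemma step_homotopyCategory [EnoughInjectives C] [HasProductsOfShape ℤ C]
    (M : HomotopyCategory C (ComplexShape.up ℤ)) :
    ∃ (W E : HomotopyCategory C (ComplexShape.up ℤ)) (w : W ⟶ M) (e : M ⟶ E)
      (d : E ⟶ W⟦(1 : ℤ)⟧), Triangle.mk w e d ∈ distTriang _ ∧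
        (HomotopyCategory.subcategoryAcyclic C).rightOrthogonal E ∧
        ∀ ⦃X⦄, singleProjective C X → ∀ g : X ⟶ W, g ≫ w = 0 := by
  obtain ⟨Y, rfl⟩ := HomotopyCategory.quotient_obj_surjective M
  let F (n : ℤ) := (singleK n).obj (Injective.under (Y.opcycles n))
  let φ (n : ℤ) : Y ⟶ F n :=
    HomologicalComplex.mkHomToSingle (Y.pOpcycles n ≫ Injective.ι _) (by simp)
  let e : (quotK).obj Y ⟶ ∏ᶜ fun n ↦ (quotK).obj (F n) := Pi.lift fun n ↦ (quotK).map (φ n)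
  obtain ⟨W, w, d, hT⟩ := distinguished_cocone_triangle₁ e
  refine ⟨W, _, w, e, d, hT, rightOrthogonal_pi _ _ fun n ↦ ?_, ?_⟩
  · have := isKInjective_single (A := Injective.under (Y.opcycles n)) n
    exact CochainComplex.IsKInjective.rightOrthogonal _
  · rintro X ⟨A, n, hA, ⟨i⟩⟩ g
    rw [← cancel_epi i.inv, comp_zero]
    obtain ⟨f, hf⟩ := (quotK).map_surjective (i.inv ≫ g ≫ w)
    rw [← hf, quotient_map_fromSingle_eq_zero_iff]
    have h0 : w ≫ e = 0 := comp_distTriang_mor_zero₁₂ _ hT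
    have h1 : (quotK).map (f ≫ φ n) = 0 := by
      have : e ≫ Pi.π _ n = (quotK).map (φ n) := Pi.lift_π _ _
      rw [Functor.map_comp, hf, ← this]
      simp only [Category.assoc]
      rw [reassoc_of% h0]
      simp
    have h2 := f_eq_zero_of_quotient_map_single_eq_zero _ h1
    have h3 : f.f n ≫ Y.pOpcycles n = 0 := by
      rw [← cancel_mono (Injective.ι _),
        ← cancel_mono (HomologicalComplex.singleObjXSelf (ComplexShape.up ℤ) n _).inv]
      simpa [φ] using h2
    have hex : (ShortComplex.mk (Y.d (n - 1) n) (Y.pOpcycles n) (by simp)).Exact :=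
      ShortComplex.exact_of_g_is_cokernel _ (Y.opcyclesIsCokernel (n - 1) n (by simp))
    exact ⟨hex.liftFromProjective
      ((HomologicalComplex.singleObjXSelf (ComplexShape.up ℤ) n A).inv ≫ f.f n) (by simp [h3]),
      hex.liftFromProjective_comp _ _⟩
end Concrete

/-! ### K-injective and K-projective resolutions -/

section Res
open Pretriangulated
variable {C : Type*} [Category C] [Abelian C]

local notation "quotK" => HomotopyCategory.quotient C (ComplexShape.up ℤ)

theorem exists_kInjective_resolution [EnoughProjectives C] [EnoughInjectives C]
    [HasProductsOfShape ℕ C] [HasProductsOfShape ℤ C] (K : CochainComplex C ℤ) :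
    ∃ (L : CochainComplex C ℤ) (f : K ⟶ L), L.IsKInjective ∧ QuasiIso f := by
  obtain ⟨A, I, a, b, c, hT, hA, hI⟩ := exists_triangle_of_step
    rightOrthogonal_singleProjective_le step_homotopyCategory ((quotK).obj K)
  obtain ⟨L, rfl⟩ := HomotopyCategory.quotient_obj_surjective I
  obtain ⟨f, rfl⟩ := (quotK).map_surjective b
  refine ⟨L, f, (CochainComplex.isKInjective_iff_rightOrthogonal L).2 hI, ?_⟩
  have h : (HomotopyCategory.subcategoryAcyclic C).trW ((quotK).map f) :=
    ObjectProperty.trW.mk' _ hT hA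
  rw [← HomotopyCategory.quasiIso_eq_trW_subcategoryAcyclic,
    HomotopyCategory.quotient_map_mem_quasiIso_iff] at h
  exact h

open Opposite

lemma quasiIso_of_op {K L : CochainComplex C ℤ} (f : K ⟶ L)
    (hf : QuasiIso ((CochainComplex.opEquivalence C).functor.map f.op)) : QuasiIso f := by
  refine ⟨fun n ↦ ?_⟩
  obtain ⟨n, rfl⟩ : ∃ m : ℤ, n = -m := ⟨-n, by simp⟩
  have h := hf.quasiIsoAt n
  rw [quasiIsoAt_iff' _ (n - 1) n (n + 1) (by simp) (by simp)] at h
  -- In degrees `n - 1, n, n + 1`, the opposite complex is by definition the opposite of the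
  -- original one in degrees `-(n + 1), -n, -(n - 1)`.
  rw [quasiIsoAt_iff' _ (-(n + 1)) (-n) (-(n - 1)) (by simp; lia) (by simp; lia),
    ← ShortComplex.quasiIso_opMap_iff]
  exact h

/-- K-projective resolutions are K-injective resolutions in the opposite category. -/
theorem exists_kProjective_resolution [EnoughProjectives C] [EnoughInjectives C]
    [HasCoproductsOfShape ℕ C] [HasCoproductsOfShape ℤ C] (K : CochainComplex C ℤ) :
    ∃ (L : CochainComplex C ℤ) (f : L ⟶ K), L.IsKProjective ∧ QuasiIso f := by
  obtain ⟨I, g, hI, hg⟩ := exists_kInjective_resolution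
    ((CochainComplex.opEquivalence C).functor.obj (op K))
  let L : (CochainComplex C ℤ)ᵒᵖ := (CochainComplex.opEquivalence C).functor.objPreimage I
  let e : (CochainComplex.opEquivalence C).functor.obj L ≅ I :=
    (CochainComplex.opEquivalence C).functor.objObjPreimageIso I
  obtain ⟨f, hf⟩ := (CochainComplex.opEquivalence C).functor.map_surjective (g ≫ e.inv)
  refine ⟨L.unop, f.unop, CochainComplex.isKProjective_of_op
    (CochainComplex.isKInjective_of_iso e.symm), quasiIso_of_op _ ?_⟩
  rw [Quiver.Hom.op_unop, hf]
  infer_instance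
end Res

/-! ### Adjoints from local objects -/

section Adj
universe v₁ v₂ u₁ u₂
variable {C : Type u₁} {D : Type u₂} [Category.{v₁} C] [Category.{v₂} D] (F : C ⥤ D)

/-- `F` has a right adjoint if every object of `D` lifts to a local object `I` of `C`, that is, one
for which `F` induces bijections on `Hom(-, I)`. -/
lemma isLeftAdjoint_of_local
    (h : ∀ d : D, ∃ (I : C) (_ : F.obj I ≅ d), ∀ X, Function.Bijective (F.map : (X ⟶ I) → _)) :
    F.IsLeftAdjoint := by
  choose I e hI using h
  let E (X : C) (d : D) : (F.obj X ⟶ d) ≃ (X ⟶ I d) :=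
    ((Equiv.ofBijective _ (hI d X)).trans ((e d).homToEquiv)).symm
  have hE (X : C) (d : D) (y : X ⟶ I d) : (E X d).symm y = F.map y ≫ (e d).hom := rfl
  exact ⟨_, ⟨Adjunction.adjunctionOfEquivRight E fun X' X d f g ↦ by
    obtain ⟨y, rfl⟩ := (E X d).symm.surjective g
    apply (E X' d).symm.injective
    rw [Equiv.symm_apply_apply, Equiv.apply_symm_apply, hE, hE, F.map_comp, Category.assoc]⟩⟩

lemma isRightAdjoint_of_colocal
    (h : ∀ d : D, ∃ (I : C) (_ : F.obj I ≅ d), ∀ X, Function.Bijective (F.map : (I ⟶ X) → _)) :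
    F.IsRightAdjoint := by
  choose I e hI using h
  let E (d : D) (X : C) : (I d ⟶ X) ≃ (d ⟶ F.obj X) :=
    (Equiv.ofBijective _ (hI d X)).trans ((e d).homFromEquiv)
  exact ⟨_, ⟨Adjunction.adjunctionOfEquivLeft E fun d X X' f g ↦ by simp [E]⟩⟩
end Adj

/-- The canonical localization functor `Qh : K(R) ⥤ D(R)` admits both a left adjoint and a
right adjoint (given by dg-projective and dg-injective resolutions respectively). -/
theorem Qh_isRightAdjoint_and_isLeftAdjoint {R : Type} [Ring R]
    [HasDerivedCategory (ModuleCat R)] :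
    (DerivedCategory.Qh (C := ModuleCat R)).IsRightAdjoint ∧
      (DerivedCategory.Qh (C := ModuleCat R)).IsLeftAdjoint := by
  constructor
  · refine isRightAdjoint_of_colocal _ fun d ↦ ?_
    obtain ⟨K, ⟨e⟩⟩ : ∃ K, Nonempty (DerivedCategory.Q.obj K ≅ d) :=
      ⟨_, ⟨DerivedCategory.Q.objObjPreimageIso d⟩⟩
    obtain ⟨L, f, hL, hf⟩ := exists_kProjective_resolution K
    exact ⟨_, (DerivedCategory.quotientCompQhIso _).app L ≪≫ asIso (DerivedCategory.Q.map f) ≪≫ e,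
      fun X ↦ CochainComplex.IsKProjective.Qh_map_bijective L X⟩
  · refine isLeftAdjoint_of_local _ fun d ↦ ?_
    obtain ⟨K, ⟨e⟩⟩ : ∃ K, Nonempty (DerivedCategory.Q.obj K ≅ d) :=
      ⟨_, ⟨DerivedCategory.Q.objObjPreimageIso d⟩⟩
    obtain ⟨L, f, hL, hf⟩ := exists_kInjective_resolution K
    exact ⟨_, (DerivedCategory.quotientCompQhIso _).app L ≪≫
      (asIso (DerivedCategory.Q.map f)).symm ≪≫ e,
      fun X ↦ CochainComplex.IsKInjective.Qh_map_bijective X L⟩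
end
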